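/- arXiv:math/0303365 — 2 statements merged into one kernel-verified Lean document; each statement's English description precedes it below -/
import Mathlib

section
/- Let μ be an equilibrium measure of F. For every twice continuously differentiable function φ : ℂ → ℝ with compact support there is a constant c > 0 such that for every integer n ≥ 0 and every bounded Borel function ψ : ℂ → ℝ, one has |∫ (Λⁿφ)·ψ dμ − (∫ φ dμ)(∫ ψ dμ)| ≤ c · l⁻ⁿ · sup|ψ| (exponential mixing of order l⁻ⁿ). -/
open MeasureTheory Polynomial Filter
open scoped ENNReal

/-- The Perron–Frobenius operator of the polynomial correspondence `F = f ∘ g⁻¹`: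
`Λφ(z) = (deg f)⁻¹ Σ_w φ(g(w))`, the sum running over the roots `w` of `f - z`
counted with multiplicity. -/
noncomputable def Lam (f g : Polynomial ℂ) (φ : ℂ → ℝ) : ℂ → ℝ :=
  fun z => (f.natDegree : ℝ)⁻¹ * (((f - C z).roots).map (fun w => φ (g.eval w))).sum

/-- An equilibrium measure of the correspondence `F = f ∘ g⁻¹`: a compactly supported
Borel probability measure `μ` on `ℂ` such that for every compactly supported probability
measure `ν` with bounded density with respect to Lebesgue measure and every bounded
continuous `φ`, `∫ Λⁿφ dν → ∫ φ dμ`. -/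
def IsEquilibrium (f g : Polynomial ℂ) (μ : Measure ℂ) : Prop :=
  IsProbabilityMeasure μ ∧ (∃ K : Set ℂ, IsCompact K ∧ μ Kᶜ = 0) ∧
  ∀ ν : Measure ℂ, IsProbabilityMeasure ν →
    (∃ K : Set ℂ, IsCompact K ∧ ν Kᶜ = 0) →
    (∃ h : ℂ → ℝ≥0∞, (∃ B : ℝ≥0∞, B < ⊤ ∧ ∀ z, h z ≤ B) ∧ ν = volume.withDensity h) →
    ∀ φ : ℂ → ℝ, Continuous φ → (∃ M : ℝ, ∀ z, |φ z| ≤ M) →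
      Tendsto (fun n => ∫ z, ((Lam f g)^[n] φ) z ∂ν) atTop (nhds (∫ z, φ z ∂μ))

/-!
Exponential mixing follows from a duality for the logarithmic kernel. Write `l = deg f / deg g` and
let `Λ* = Lam g f` be the operator of the inverse correspondence `g ∘ f⁻¹`. The symmetry of the
resultant of `f - z` and `g - ζ` gives, after iteration (`Lam_log`),

  `Λⁿ (log |· - ζ|) (z) = cₙ + l⁻ⁿ Λ*ⁿ (log |z - ·|) (ζ)`,

with `cₙ` bounded. A `C²` function `φ` of compact support is a logarithmic potential
`φ(z) = ∫ ρ(ζ) log |z - ζ| dζ` with `ρ` continuous of compact support and total mass zero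
(`exists_log_potential`). Applying `Λⁿ` under the integral, `cₙ` disappears because `∫ ρ = 0`, and
the gain `l⁻ⁿ` appears in front of `∫ ρ(ζ) Λ*ⁿ(log |z - ·|)(ζ) dζ`.

The points of `Λ*ⁿ` over `ζ` run off to infinity with `n`, so the kernel is normalised to
`log |z - x| - log⁺ |x|`; this changes the integral by a constant independent of `z`
(`exists_iter_eq`). The normalised kernel has `L¹(μ)` norm in `z` bounded uniformly in `x`
(`exists_kernel_bound`), so by Fubini `Λⁿφ` is within `O(l⁻ⁿ)` of a constant in `L¹(μ)`. As `μ` is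
invariant, the constant may be taken to be `∫ φ dμ`, and the estimate follows by pairing with `ψ`.

The uniform bound needs that the potential `∫ log |z - x| dμ(z)` is bounded below in `x`. This
again comes from duality: `∫ Λⁿ(log |· - x|) dν = cₙ + l⁻ⁿ Λ*ⁿ(Uν)(x)` for normalised Lebesgue
measure `ν` on the unit disc, whose potential `Uν` is bounded below; the bound passes to the limit
`n → ∞` for continuous truncations of the kernel, and Fatou's lemma removes the truncation.
-/

/-! ### Backward images and the resultant duality -/

/-- The multiset of `n`-th backward images of `z` under `F = f ∘ g⁻¹`, i.e. of the points
`g(w₁)`, `f(w₁) = z`, iterated `n` times; it has `(deg f) ^ n` elements. The `n`-th *forward*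
images of `ζ` are `backImg g f n ζ`. -/
noncomputable def backImg (f g : Polynomial ℂ) : ℕ → ℂ → Multiset ℂ
  | 0, z => {z}
  | n + 1, z => ((f - C z).roots.map fun w => g.eval w).bind (backImg f g n)

lemma card_roots_sub (f : Polynomial ℂ) (z : ℂ) :
    (f - C z).roots.card = f.natDegree := by
  rw [IsAlgClosed.card_roots_eq_natDegree, natDegree_sub_C]

lemma backImg_one (f g : Polynomial ℂ) (z : ℂ) :
    backImg f g 1 z = (f - C z).roots.map fun w => g.eval w := by
  rw [backImg]
  exact Multiset.bind_singleton _ id |>.trans (Multiset.map_id _)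

lemma backImg_succ (f g : Polynomial ℂ) (n : ℕ) (z : ℂ) :
    backImg f g (n + 1) z = (backImg f g 1 z).bind (backImg f g n) := by
  rw [backImg_one, backImg]

lemma backImg_succ' (f g : Polynomial ℂ) (n : ℕ) (z : ℂ) :
    backImg f g (n + 1) z = (backImg f g n z).bind (backImg f g 1) := by
  induction n generalizing z with
  | zero => simp [backImg]
  | succ n ih =>
    rw [backImg_succ, Multiset.bind_congr (fun y _ => ih y), ← Multiset.bind_assoc,
      ← backImg_succ]

lemma card_backImg (f g : Polynomial ℂ) (n : ℕ) (z : ℂ) :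
    (backImg f g n z).card = f.natDegree ^ n := by
  induction n generalizing z with
  | zero => simp [backImg]
  | succ n ih =>
    rw [backImg_succ, Multiset.card_bind, backImg_one]
    simp [ih, card_roots_sub, pow_succ']

lemma Lam_eq (f g : Polynomial ℂ) (φ : ℂ → ℝ) (z : ℂ) :
    Lam f g φ z = (f.natDegree : ℝ)⁻¹ * ((backImg f g 1 z).map φ).sum := by
  simp [Lam, backImg_one, Multiset.map_map]

lemma Lam_iter (f g : Polynomial ℂ) (φ : ℂ → ℝ) (n : ℕ) (z : ℂ) :
    (Lam f g)^[n] φ z = ((f.natDegree : ℝ) ^ n)⁻¹ * ((backImg f g n z).map φ).sum := by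
  induction n generalizing z with
  | zero => simp [backImg]
  | succ n ih =>
    rw [Function.iterate_succ_apply', Lam_eq, funext ih, Multiset.sum_map_mul_left, backImg_succ f g n,
      Multiset.map_bind, Multiset.sum_bind, ← mul_assoc, pow_succ', mul_inv]

lemma leadingCoeff_sub_C' {f : Polynomial ℂ} (hf : 0 < f.degree) (z : ℂ) :
    (f - C z).leadingCoeff = f.leadingCoeff :=
  leadingCoeff_sub_of_degree_lt (degree_C_le.trans_lt hf)

lemma norm_eval_sub {f : Polynomial ℂ} (hf : 0 < f.degree) (w z : ℂ) :
    ‖f.eval w - z‖ =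
      ‖f.leadingCoeff‖ * (((f - C z).roots).map fun a => ‖w - a‖).prod := by
  have h := (IsAlgClosed.splits (f - C z)).eval_eq_prod_roots w
  rw [leadingCoeff_sub_C' hf, eval_sub, eval_C] at h
  rw [h, norm_mul]
  congr 1
  have := Multiset.prod_hom (((f - C z).roots).map fun a => w - a) (normHom (α := ℂ))
  simpa [Multiset.map_map, Function.comp_def] using this.symm

/-- The resultant identity `Res(f - z, g - ζ) = ± Res(g - ζ, f - z)`, up to the moduli of the
leading coefficients. -/
lemma prod_backImg_one {f g : Polynomial ℂ} (hf : 0 < f.degree) (hg : 0 < g.degree) (z ζ : ℂ) :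
    ((backImg f g 1 z).map fun y => ‖y - ζ‖).prod =
      (‖g.leadingCoeff‖ ^ f.natDegree / ‖f.leadingCoeff‖ ^ g.natDegree) *
        ((backImg g f 1 ζ).map fun x => ‖z - x‖).prod := by
  have h0 : ‖f.leadingCoeff‖ ≠ 0 := by
    simpa using ne_zero_of_degree_gt hf
  simp only [backImg_one, Multiset.map_map, Function.comp_def]
  have h1 : ∀ w, ‖z - f.eval w‖ =
      ‖f.leadingCoeff‖ * (((f - C z).roots).map fun a => ‖a - w‖).prod := by
    intro w
    rw [norm_sub_rev, norm_eval_sub hf]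
    simp_rw [norm_sub_rev w]
  simp_rw [h1, norm_eval_sub hg, Multiset.prod_map_mul, Multiset.map_const', Multiset.prod_replicate,
    card_roots_sub]
  rw [Multiset.prod_map_prod_map]
  field_simp

/-- The multiplicative constants in the iterated resultant identity. -/
noncomputable def resConst (f g : Polynomial ℂ) : ℕ → ℝ
  | 0 => 1
  | n + 1 => resConst f g n ^ f.natDegree *
      (‖g.leadingCoeff‖ ^ f.natDegree / ‖f.leadingCoeff‖ ^ g.natDegree) ^ (g.natDegree ^ n)

lemma resConst_pos {f g : Polynomial ℂ} (hf : 0 < f.degree) (hg : 0 < g.degree) (n : ℕ) :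
    0 < resConst f g n := by
  have h0 : 0 < ‖f.leadingCoeff‖ := by
    simpa using ne_zero_of_degree_gt hf
  have h1 : 0 < ‖g.leadingCoeff‖ := by
    simpa using ne_zero_of_degree_gt hg
  induction n with
  | zero => simp [resConst]
  | succ n ih => rw [resConst]; positivity

/-- Iterated resultant identity: backward images of `z` and forward images of `ζ` are
multiplicatively dual. It holds without exception, both sides vanishing together. -/
lemma prod_backImg {f g : Polynomial ℂ} (hf : 0 < f.degree) (hg : 0 < g.degree) (n : ℕ)
    (z ζ : ℂ) :
    ((backImg f g n z).map fun y => ‖y - ζ‖).prod =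
      resConst f g n * ((backImg g f n ζ).map fun x => ‖z - x‖).prod := by
  induction n generalizing z with
  | zero => simp [backImg, resConst]
  | succ n ih =>
    rw [backImg_succ, Multiset.map_bind, Multiset.prod_bind, Multiset.map_congr rfl (fun y _ => ih y),
      Multiset.prod_map_mul, Multiset.map_const', Multiset.prod_replicate, Multiset.prod_map_prod_map,
      Multiset.map_congr rfl (fun x _ => prod_backImg_one hf hg z x),
      Multiset.prod_map_mul, Multiset.map_const', Multiset.prod_replicate, card_backImg, card_backImg,
      pow_one, backImg_succ' g f, Multiset.map_bind, Multiset.prod_bind, resConst, mul_assoc]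

lemma mem_backImg_iff {f g : Polynomial ℂ} (hf : 0 < f.degree) (hg : 0 < g.degree) (n : ℕ)
    (z ζ : ℂ) : ζ ∈ backImg f g n z ↔ z ∈ backImg g f n ζ := by
  have h := prod_backImg hf hg n z ζ
  have h1 : ((backImg f g n z).map fun y => ‖y - ζ‖).prod = 0 ↔ ζ ∈ backImg f g n z := by
    rw [Multiset.prod_eq_zero_iff]
    simp [sub_eq_zero]
  have h2 : ((backImg g f n ζ).map fun x => ‖z - x‖).prod = 0 ↔ z ∈ backImg g f n ζ := by
    rw [Multiset.prod_eq_zero_iff]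
    simp [sub_eq_zero]
  rw [← h1, ← h2, h]
  simp [(resConst_pos hf hg n).ne']

/-- Duality for the logarithmic kernel: `Λⁿ log|· - ζ| = cₙ + l⁻ⁿ Λ*ⁿ log|z - ·|`, where
`Λ* = Lam g f` is the Perron–Frobenius operator of the inverse correspondence. -/
lemma Lam_log {f g : Polynomial ℂ} (hf : 0 < f.degree) (hg : 0 < g.degree) (n : ℕ)
    {z ζ : ℂ} (h : ζ ∉ backImg f g n z) :
    (Lam f g)^[n] (fun y => Real.log ‖y - ζ‖) z =
      ((f.natDegree : ℝ) ^ n)⁻¹ * Real.log (resConst f g n) +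
      ((f.natDegree : ℝ) / g.natDegree)⁻¹ ^ n *
        (Lam g f)^[n] (fun x => Real.log ‖z - x‖) ζ := by
  have hg0 : (g.natDegree : ℝ) ≠ 0 := by
    have := natDegree_pos_iff_degree_pos.2 hg
    positivity
  have h' : z ∉ backImg g f n ζ := fun h2 => h ((mem_backImg_iff hf hg n z ζ).2 h2)
  have e1 : ((backImg f g n z).map fun y => Real.log ‖y - ζ‖).sum =
      Real.log ((backImg f g n z).map fun y => ‖y - ζ‖).prod := by
    rw [Real.log_multiset_prod, Multiset.map_map]
    · rfl
    · simp only [Multiset.mem_map, ne_eq]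
      rintro _ ⟨y, hy, rfl⟩ h0
      rw [norm_eq_zero, sub_eq_zero] at h0
      exact h (h0 ▸ hy)
  have e2 : ((backImg g f n ζ).map fun x => Real.log ‖z - x‖).sum =
      Real.log ((backImg g f n ζ).map fun x => ‖z - x‖).prod := by
    rw [Real.log_multiset_prod, Multiset.map_map]
    · rfl
    · simp only [Multiset.mem_map, ne_eq]
      rintro _ ⟨y, hy, rfl⟩ h0
      rw [norm_eq_zero, sub_eq_zero] at h0
      exact h' (h0 ▸ hy)
  have h3 : ((backImg g f n ζ).map fun x => ‖z - x‖).prod ≠ 0 := by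
    intro h0
    rw [Multiset.prod_eq_zero_iff, Multiset.mem_map] at h0
    obtain ⟨y, hy, h0⟩ := h0
    rw [norm_eq_zero, sub_eq_zero] at h0
    exact h' (h0 ▸ hy)
  rw [Lam_iter, Lam_iter, e1, e2, prod_backImg hf hg, Real.log_mul (resConst_pos hf hg n).ne' h3,
    mul_add, inv_pow, div_pow, inv_div]
  field_simp

/-- The additive constants in `Lam_log` are partial sums of a geometric series of ratio `l⁻¹`. -/
lemma resConst_bound {f g : Polynomial ℂ} (hfg : g.natDegree < f.natDegree)
    (hf : 0 < f.degree) (hg : 0 < g.degree) :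
    ∃ B : ℝ, ∀ n, |((f.natDegree : ℝ) ^ n)⁻¹ * Real.log (resConst f g n)| ≤ B := by
  set A := (‖g.leadingCoeff‖ ^ f.natDegree / ‖f.leadingCoeff‖ ^ g.natDegree) with hA
  have h0 : 0 < ‖f.leadingCoeff‖ := by
    simpa using ne_zero_of_degree_gt hf
  have h1 : 0 < ‖g.leadingCoeff‖ := by
    simpa using ne_zero_of_degree_gt hg
  have hA0 : 0 < A := by positivity
  have hd : (0 : ℝ) < f.natDegree := by
    have := natDegree_pos_iff_degree_pos.2 hf
    positivity
  set r : ℝ := (g.natDegree : ℝ) / f.natDegree with hr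
  have hr0 : 0 ≤ r := by positivity
  have hr1 : r < 1 := by
    rw [hr, div_lt_one hd]; exact_mod_cast hfg
  have key : ∀ n, ((f.natDegree : ℝ) ^ n)⁻¹ * Real.log (resConst f g n) =
      (Real.log A / f.natDegree) * ∑ k ∈ Finset.range n, r ^ k := by
    intro n
    induction n with
    | zero => simp [resConst]
    | succ n ih =>
      rw [resConst, Real.log_mul (pow_pos (resConst_pos hf hg n) _).ne' (pow_pos hA0 _).ne',
        Real.log_pow, Real.log_pow, Finset.sum_range_succ, mul_add, mul_add, ← ih, hr, div_pow]
      push_cast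
      field_simp
      ring
  refine ⟨|Real.log A / f.natDegree| * (1 - r)⁻¹, fun n => ?_⟩
  rw [key, abs_mul]
  refine mul_le_mul_of_nonneg_left ?_ (abs_nonneg _)
  rw [abs_of_nonneg (Finset.sum_nonneg fun k _ => pow_nonneg hr0 k), ← tsum_geometric_of_lt_one hr0 hr1]
  exact (summable_geometric_of_lt_one hr0 hr1).sum_le_tsum _ (fun k _ => pow_nonneg hr0 k)

lemma Lam_iter_mono {f g : Polynomial ℂ} {φ ψ : ℂ → ℝ} (n : ℕ) (z : ℂ)
    (h : ∀ y ∈ backImg f g n z, φ y ≤ ψ y) : (Lam f g)^[n] φ z ≤ (Lam f g)^[n] ψ z := by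
  rw [Lam_iter, Lam_iter]
  exact mul_le_mul_of_nonneg_left (Multiset.sum_map_le_sum_map _ _ h) (by positivity)

lemma Lam_iter_const {f g : Polynomial ℂ} (hf : 0 < f.degree) (n : ℕ) (c : ℝ) (z : ℂ) :
    (Lam f g)^[n] (fun _ => c) z = c := by
  have := natDegree_pos_iff_degree_pos.2 hf
  rw [Lam_iter, Multiset.map_const', Multiset.sum_replicate, card_backImg, nsmul_eq_mul]
  push_cast
  field_simp

lemma Lam_iter_abs_le {f g : Polynomial ℂ} (φ : ℂ → ℝ) (n : ℕ) (z : ℂ) :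
    |(Lam f g)^[n] φ z| ≤ (Lam f g)^[n] (fun y => |φ y|) z := by
  rw [Lam_iter, Lam_iter, abs_mul, abs_of_nonneg (by positivity : (0:ℝ) ≤ ((f.natDegree : ℝ) ^ n)⁻¹)]
  refine mul_le_mul_of_nonneg_left ?_ (by positivity)
  simpa [Multiset.map_map, Function.comp_def] using
    Multiset.abs_sum_le_sum_abs (s := (backImg f g n z).map φ)

lemma Lam_iter_sub {f g : Polynomial ℂ} (φ ψ : ℂ → ℝ) (n : ℕ) (z : ℂ) :
    (Lam f g)^[n] (fun y => φ y - ψ y) z = (Lam f g)^[n] φ z - (Lam f g)^[n] ψ z := by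
  rw [Lam_iter, Lam_iter, Lam_iter, Multiset.sum_map_sub, mul_sub]

lemma Lam_iter_mul {f g : Polynomial ℂ} (c : ℝ) (φ : ℂ → ℝ) (n : ℕ) (z : ℂ) :
    (Lam f g)^[n] (fun y => c * φ y) z = c * (Lam f g)^[n] φ z := by
  rw [Lam_iter, Lam_iter, Multiset.sum_map_mul_left, mul_left_comm]

lemma Lam_iter_congr {f g : Polynomial ℂ} {φ ψ : ℂ → ℝ} (n : ℕ) (z : ℂ)
    (h : ∀ y ∈ backImg f g n z, φ y = ψ y) : (Lam f g)^[n] φ z = (Lam f g)^[n] ψ z := by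
  rw [Lam_iter, Lam_iter, Multiset.map_congr rfl h]

lemma integrable_multiset_sum {α : Type*} [MeasurableSpace α] {m : Measure α} (s : Multiset ℂ)
    (h : α → ℂ → ℝ) (hh : ∀ y ∈ s, Integrable (fun a => h a y) m) :
    Integrable (fun a => (s.map (h a)).sum) m ∧
      ∫ a, (s.map (h a)).sum ∂m = (s.map fun y => ∫ a, h a y ∂m).sum := by
  induction s using Multiset.induction_on with
  | empty => simp
  | cons y s ih =>
    obtain ⟨i1, i2⟩ := ih fun y hy => hh y (Multiset.mem_cons_of_mem hy)
    have i3 := hh y (Multiset.mem_cons_self y s)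
    simp only [Multiset.map_cons, Multiset.sum_cons]
    exact ⟨i3.add i1, by rw [integral_add i3 i1, i2]⟩

/-- `Λⁿ` is a finite average, so it commutes with integrals depending on a parameter. -/
lemma Lam_iter_integral {α : Type*} [MeasurableSpace α] {m : Measure α} (f g : Polynomial ℂ)
    (n : ℕ) (z : ℂ) (h : α → ℂ → ℝ) (hh : ∀ y ∈ backImg f g n z, Integrable (fun a => h a y) m) :
    Integrable (fun a => (Lam f g)^[n] (h a) z) m ∧
      ∫ a, (Lam f g)^[n] (h a) z ∂m = (Lam f g)^[n] (fun y => ∫ a, h a y ∂m) z := by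
  obtain ⟨i1, i2⟩ := integrable_multiset_sum (backImg f g n z) h hh
  simp only [Lam_iter]
  exact ⟨i1.const_mul _, by rw [integral_const_mul, i2]⟩

/-! ### Continuity and joint measurability of the operator -/

lemma exists_root_vector (f : Polynomial ℂ) (z : ℂ) :
    ∃ v : Fin f.natDegree → ℂ, (f - C z).roots = Finset.univ.val.map v := by
  have h := card_roots_sub f z
  obtain ⟨l, hl⟩ := Quot.exists_rep (f - C z).roots
  have hl : (l : Multiset ℂ) = (f - C z).roots := hl
  rw [← hl, Multiset.coe_card] at h
  refine ⟨fun i => l.get (i.cast h.symm), ?_⟩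
  rw [← hl, Fin.univ_val_map, Multiset.coe_eq_coe]
  apply List.Perm.of_eq
  apply List.ext_get
  · simp [h]
  · intro n h1 h2
    simp

/-- An enumeration (with multiplicity) of the roots of `f - z`. -/
noncomputable def rootVec (f : Polynomial ℂ) (z : ℂ) : Fin f.natDegree → ℂ :=
  (exists_root_vector f z).choose

lemma roots_eq_rootVec (f : Polynomial ℂ) (z : ℂ) :
    (f - C z).roots = Finset.univ.val.map (rootVec f z) :=
  (exists_root_vector f z).choose_spec

lemma Lam_eq_sum (f g : Polynomial ℂ) (φ : ℂ → ℝ) (z : ℂ) :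
    Lam f g φ z = (f.natDegree : ℝ)⁻¹ * ∑ i, φ (g.eval (rootVec f z i)) := by
  rw [Lam, roots_eq_rootVec, Multiset.map_map]
  rfl

lemma sub_eq_prod_rootVec {f : Polynomial ℂ} (hf : 0 < f.degree) (z t : ℂ) :
    f.eval t - z = f.leadingCoeff * ∏ i, (t - rootVec f z i) := by
  have h := (IsAlgClosed.splits (f - C z)).eval_eq_prod_roots t
  rw [leadingCoeff_sub_C' hf, eval_sub, eval_C, roots_eq_rootVec, Multiset.map_map] at h
  exact h

lemma eval_rootVec {f : Polynomial ℂ} (hf : 0 < f.degree) (z : ℂ) (i : Fin f.natDegree) :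
    f.eval (rootVec f z i) = z := by
  have h := sub_eq_prod_rootVec hf z (rootVec f z i)
  rw [Finset.prod_eq_zero (Finset.mem_univ i) (sub_self _), mul_zero, sub_eq_zero] at h
  exact h

/-- Continuity of the roots of `f - z` as a multiset: along a sequence the root vectors stay in a
compact set because `f` is proper, and any limit vector lists the roots of the limit polynomial. -/
lemma continuous_Lam {f g : Polynomial ℂ} (hf : 0 < f.degree) {φ : ℂ → ℝ} (hφ : Continuous φ) :
    Continuous (Lam f g φ) := by
  rw [continuous_iff_continuousAt]
  intro z
  refine tendsto_of_subseq_tendsto fun ns hns => ?_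
  have hK : IsCompact ((fun x => f.eval x) ⁻¹' (insert z (Set.range ns))) :=
    (f.isProperMap_eval hf).isCompact_preimage hns.isCompact_insert_range
  obtain ⟨a, -, ms, hmono, hms⟩ := (isCompact_univ_pi fun _ : Fin f.natDegree => hK).tendsto_subseq
    (x := fun n => rootVec f (ns n)) (fun n i _ => by
      simp only [Set.mem_preimage, eval_rootVec hf]
      exact Set.mem_insert_of_mem _ ⟨n, rfl⟩)
  refine ⟨ms, ?_⟩
  rw [tendsto_pi_nhds] at hms
  have hlim : Tendsto (fun n => ns (ms n)) atTop (nhds z) := hns.comp hmono.tendsto_atTop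
  have hroots : ∀ t, f.eval t - z = f.leadingCoeff * ∏ i, (t - a i) := by
    intro t
    refine tendsto_nhds_unique (hlim.const_sub (f.eval t)) ?_
    simp_rw [sub_eq_prod_rootVec hf]
    exact (tendsto_finsetProd _ fun i _ => (hms i).const_sub t).const_mul _
  have hr : (f - C z).roots = Finset.univ.val.map a := by
    have : f - C z = C f.leadingCoeff * ((Finset.univ.val.map a).map fun b => X - C b).prod := by
      refine Polynomial.funext fun t => ?_
      rw [eval_sub, eval_C, hroots, eval_mul, eval_C, eval_multiset_prod, Multiset.map_map,
        Multiset.map_map]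
      simp [Function.comp_def, Finset.prod]
    rw [this, roots_C_mul _ (leadingCoeff_ne_zero.2 (ne_zero_of_degree_gt hf)),
      roots_multiset_prod_X_sub_C]
  have h2 : Lam f g φ z = (f.natDegree : ℝ)⁻¹ * ∑ i, φ (g.eval (a i)) := by
    rw [Lam, hr, Multiset.map_map]
    rfl
  rw [h2]
  simp_rw [Lam_eq_sum]
  refine (tendsto_finsetSum _ fun i _ => ?_).const_mul _
  exact ((hφ.comp g.continuous).tendsto (a i)).comp (hms i)

lemma continuous_Lam_iter {f g : Polynomial ℂ} (hf : 0 < f.degree) {φ : ℂ → ℝ}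
    (hφ : Continuous φ) (n : ℕ) : Continuous ((Lam f g)^[n] φ) := by
  induction n with
  | zero => exact hφ
  | succ n ih => rw [Function.iterate_succ_apply']; exact continuous_Lam hf ih

/-- The measure `∑ δ_{g(w)}` over the roots `w` of `f - z`. -/
noncomputable def rootMeasure (f g : Polynomial ℂ) (z : ℂ) : Measure ℂ :=
  ∑ i, Measure.dirac (g.eval (rootVec f z i))

instance (f g : Polynomial ℂ) (z : ℂ) : IsFiniteMeasure (rootMeasure f g z) := by
  unfold rootMeasure; infer_instance

/-- Weak continuity of `z ↦ ∑ δ_{g(w)}` gives measurability: closed sets form a π-system, and the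
mass of a closed set is a limit of integrals of continuous functions. -/
lemma measurable_rootMeasure {f g : Polynomial ℂ} (hf : 0 < f.degree) :
    Measurable (rootMeasure f g) := by
  have hd : (f.natDegree : ℝ) ≠ 0 := by
    have := natDegree_pos_iff_degree_pos.2 hf
    positivity
  refine Measurable.measure_of_isPiSystem (S := {s | IsClosed s})
    (BorelSpace.measurable_eq.trans borel_eq_generateFrom_isClosed) isPiSystem_isClosed ?_ ?_
  · intro F hF
    have hlim : ∀ z, Tendsto (fun n : ℕ => ∫⁻ y, (thickenedIndicator
        (Nat.one_div_pos_of_nat (α := ℝ) (n := n)) F y : ℝ≥0∞) ∂(rootMeasure f g z)) atTop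
        (nhds (rootMeasure f g z F)) := fun z =>
      tendsto_lintegral_thickenedIndicator_of_isClosed _ hF _ tendsto_one_div_add_atTop_nhds_zero_nat
    refine measurable_of_tendsto_metrizable (fun n => ?_) (tendsto_pi_nhds.2 hlim)
    have hc : Continuous (Lam f g fun y => (thickenedIndicator
        (Nat.one_div_pos_of_nat (α := ℝ) (n := n)) F y : ℝ)) :=
      continuous_Lam hf (NNReal.continuous_coe.comp (BoundedContinuousFunction.continuous _))
    convert (ENNReal.measurable_ofReal.comp (hc.measurable.const_mul (f.natDegree : ℝ))) using 2 with z
    rw [Function.comp, Lam_eq_sum, mul_inv_cancel_left₀ hd, rootMeasure, lintegral_finsetSum_measure,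
      ENNReal.ofReal_sum_of_nonneg (fun i _ => NNReal.coe_nonneg _)]
    simp
  · have : (fun z => rootMeasure f g z Set.univ) = fun _ => (f.natDegree : ℝ≥0∞) := by
      funext z
      simp [rootMeasure]
    rw [this]
    exact measurable_const

lemma Lam_eq_integral (f g : Polynomial ℂ) (φ : ℂ → ℝ) (z : ℂ) :
    Lam f g φ z = (f.natDegree : ℝ)⁻¹ * ∫ y, φ y ∂(rootMeasure f g z) := by
  rw [Lam_eq_sum, rootMeasure, integral_finsetSum_measure]
  · simp
  · intro i _
    exact integrable_dirac (by simp)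

/-- Joint measurability of `Λ` in the point and in a parameter of the function. -/
lemma measurable_Lam {E : Type*} [MeasurableSpace E] {f g : Polynomial ℂ} (hf : 0 < f.degree)
    {h : E → ℂ → ℝ} (hh : Measurable (Function.uncurry h)) :
    Measurable (Function.uncurry fun e => Lam f g (h e)) := by
  let κ : ProbabilityTheory.Kernel (E × ℂ) ℂ :=
    ⟨fun p => rootMeasure f g p.2, (measurable_rootMeasure hf).comp measurable_snd⟩
  have hκ : ProbabilityTheory.IsFiniteKernel κ := by
    refine ⟨⟨f.natDegree, by simp, fun p => ?_⟩⟩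
    change rootMeasure f g p.2 Set.univ ≤ _
    simp [rootMeasure]
  have h1 : StronglyMeasurable (fun q : (E × ℂ) × ℂ => h q.1.1 q.2) :=
    (hh.comp ((measurable_fst.comp measurable_fst).prodMk measurable_snd)).stronglyMeasurable
  have h2 := (h1.integral_kernel_prod_right' (κ := κ)).measurable.const_mul (f.natDegree : ℝ)⁻¹
  convert h2 using 2 with p
  exact Lam_eq_integral _ _ _ _

lemma measurable_Lam_iter {E : Type*} [MeasurableSpace E] {f g : Polynomial ℂ} (hf : 0 < f.degree)
    {h : E → ℂ → ℝ} (hh : Measurable (Function.uncurry h)) (n : ℕ) :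
    Measurable (Function.uncurry fun e => (Lam f g)^[n] (h e)) := by
  induction n with
  | zero => exact hh
  | succ n ih =>
    simp_rw [Function.iterate_succ_apply']
    exact measurable_Lam hf ih

/-- Large discs are invariant under backward images, because `deg g < deg f`. -/
lemma exists_disc {f g : Polynomial ℂ} (hdeg : g.degree < f.degree) :
    ∃ R₀ : ℝ, ∀ R, R₀ ≤ R → ∀ n z, ‖z‖ ≤ R → ∀ y ∈ backImg f g n z, ‖y‖ ≤ R := by
  have h1 := (isLittleO_cobounded_of_degree_lt hdeg).bound (zero_lt_one)
  rw [← comap_norm_atTop, eventually_comap, eventually_atTop] at h1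
  obtain ⟨r, hr⟩ := h1
  obtain ⟨B, hB⟩ := (isCompact_closedBall (0 : ℂ) r).exists_bound_of_continuousOn
    g.continuous.continuousOn
  refine ⟨B, fun R hR n => ?_⟩
  have step : ∀ z, ‖z‖ ≤ R → ∀ y ∈ backImg f g 1 z, ‖y‖ ≤ R := by
    intro z hz y hy
    rw [backImg_one, Multiset.mem_map] at hy
    obtain ⟨w, hw, rfl⟩ := hy
    have hw' := (mem_roots'.1 hw).2
    rw [IsRoot.def, eval_sub, eval_C, sub_eq_zero] at hw'
    rcases le_total ‖w‖ r with h | h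
    · exact (hB w (by simpa using h)).trans hR
    · have := hr _ h w rfl
      rw [hw', one_mul] at this
      exact this.trans hz
  induction n with
  | zero =>
    intro z hz y hy
    simp only [backImg, Multiset.mem_singleton] at hy
    rwa [hy]
  | succ n ih =>
    intro z hz y hy
    rw [backImg_succ, Multiset.mem_bind] at hy
    obtain ⟨x, hx, hy⟩ := hy
    exact ih x (step z hz x hx) y hy

/-! ### The Laplacian and the smoothed logarithmic kernel -/

lemma integrableOn_log_norm_ball (r : ℝ) :
    IntegrableOn (fun x : ℂ => Real.log ‖x‖) (Metric.ball 0 r) := by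
  refine (integrableOn_fun_norm_addHaar (E := ℂ) volume (f := Real.log)).2 ?_
  rw [Complex.finrank_real_complex]
  have h : IntegrableOn (fun y : ℝ => y * Real.log y) (Set.Icc 0 r) :=
    Real.continuous_mul_log.continuousOn.integrableOn_Icc
  simpa using h.mono_set Set.Ioo_subset_Icc_self

lemma integrableOn_log_sub {K : Set ℂ} (hK : Bornology.IsBounded K) (z : ℂ) :
    IntegrableOn (fun x : ℂ => Real.log ‖z - x‖) K := by
  obtain ⟨r, hr⟩ := hK.subset_ball z
  refine IntegrableOn.mono_set ?_ hr
  have h := (integrable_indicator_iff Metric.isOpen_ball.measurableSet).2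
    (integrableOn_log_norm_ball r)
  have h2 := h.comp_sub_left z
  refine (integrable_indicator_iff Metric.isOpen_ball.measurableSet).1 (h2.congr ?_)
  refine Eventually.of_forall fun x => ?_
  simp only [Set.indicator, Metric.mem_ball, dist_eq_norm, norm_sub_rev x z, sub_zero]

lemma integrable_log_sub_mul {ρ : ℂ → ℝ} (hρ : Continuous ρ) (hc : HasCompactSupport ρ) (z : ℂ) :
    Integrable (fun x : ℂ => ρ x * Real.log ‖z - x‖) := by
  have hK : IsCompact (tsupport ρ) := hc
  rw [← integrableOn_iff_integrable_of_support_subset (s := tsupport ρ)]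
  · exact (integrableOn_log_sub hK.isBounded z).continuousOn_mul hρ.continuousOn hK
  · intro x hx
    refine subset_tsupport ρ ?_
    intro h0
    exact hx (by simp [h0])

/-- Directional derivative of a real function on the plane. -/
noncomputable def dirD (v : ℂ) (F : ℂ → ℝ) : ℂ → ℝ := fun x => fderiv ℝ F x v

/-- The Laplacian `∂₁² + ∂₂²` on the plane. -/
noncomputable def lap (F : ℂ → ℝ) : ℂ → ℝ :=
  fun x => dirD 1 (dirD 1 F) x + dirD Complex.I (dirD Complex.I F) x

lemma contDiff_dirD {F : ℂ → ℝ} {m n : ℕ∞} (hF : ContDiff ℝ n F) (h : m + 1 ≤ n) (v : ℂ) :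
    ContDiff ℝ m (dirD v F) :=
  (hF.fderiv_right (by exact_mod_cast h)).clm_apply contDiff_const

lemma hasCompactSupport_dirD {F : ℂ → ℝ} (hc : HasCompactSupport F) (v : ℂ) :
    HasCompactSupport (dirD v F) := hc.fderiv_apply ℝ v

lemma integral_mul_dirD {H F : ℂ → ℝ} (hH : ContDiff ℝ 1 H) (hF : ContDiff ℝ 1 F)
    (hc : HasCompactSupport F) (v : ℂ) :
    ∫ x, H x * dirD v F x = - ∫ x, dirD v H x * F x := by
  have hF' : Continuous (dirD v F) := (contDiff_dirD (m := 0) (n := 1) hF (by simp) v).continuous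
  have hH' : Continuous (dirD v H) := (contDiff_dirD (m := 0) (n := 1) hH (by simp) v).continuous
  refine integral_mul_fderiv_eq_neg_fderiv_mul_of_integrable ?_ ?_ ?_ ?_ ?_
  · exact (hH'.mul hF.continuous).integrable_of_hasCompactSupport hc.mul_left
  · exact (hH.continuous.mul hF').integrable_of_hasCompactSupport
      (hasCompactSupport_dirD hc v).mul_left
  · exact (hH.continuous.mul hF.continuous).integrable_of_hasCompactSupport hc.mul_left
  · exact fun x _ => hH.differentiable one_ne_zero x
  · exact fun x _ => hF.differentiable one_ne_zero x

lemma integral_mul_dirD_dirD {H F : ℂ → ℝ} (hH : ContDiff ℝ 2 H) (hF : ContDiff ℝ 2 F)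
    (hc : HasCompactSupport F) (v : ℂ) :
    ∫ x, H x * dirD v (dirD v F) x = ∫ x, dirD v (dirD v H) x * F x := by
  have h12 : ((1 : ℕ∞) + 1) ≤ 2 := by norm_num
  have hF' : ContDiff ℝ 1 (dirD v F) := contDiff_dirD (m := 1) (n := 2) hF h12 v
  have hH' : ContDiff ℝ 1 (dirD v H) := contDiff_dirD (m := 1) (n := 2) hH h12 v
  rw [integral_mul_dirD (hH.of_le one_le_two) hF' (hasCompactSupport_dirD hc v),
    integral_mul_dirD hH' (hF.of_le one_le_two) hc, neg_neg]

lemma continuous_dirD_dirD {F : ℂ → ℝ} (hF : ContDiff ℝ 2 F) (v : ℂ) :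
    Continuous (dirD v (dirD v F)) :=
  have h12 : ((1 : ℕ∞) + 1) ≤ 2 := by norm_num
  (contDiff_dirD (m := 0) (n := 1) (contDiff_dirD (m := 1) (n := 2) hF h12 v)
    (by simp) v).continuous

lemma continuous_lap {F : ℂ → ℝ} (hF : ContDiff ℝ 2 F) : Continuous (lap F) :=
  (continuous_dirD_dirD hF _).add (continuous_dirD_dirD hF _)

lemma hasCompactSupport_lap {F : ℂ → ℝ} (hc : HasCompactSupport F) :
    HasCompactSupport (lap F) :=
  (hasCompactSupport_dirD (hasCompactSupport_dirD hc _) _).add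
    (hasCompactSupport_dirD (hasCompactSupport_dirD hc _) _)

/-- Green's second identity for a compactly supported function. -/
lemma integral_mul_lap {H F : ℂ → ℝ} (hH : ContDiff ℝ 2 H) (hF : ContDiff ℝ 2 F)
    (hc : HasCompactSupport F) :
    ∫ x, H x * lap F x = ∫ x, lap H x * F x := by
  have i1 : ∀ v, Integrable fun x => H x * dirD v (dirD v F) x := fun v =>
    (hH.continuous.mul (continuous_dirD_dirD hF v)).integrable_of_hasCompactSupport
      (hasCompactSupport_dirD (hasCompactSupport_dirD hc _) _).mul_left
  have i2 : ∀ v, Integrable fun x => dirD v (dirD v H) x * F x := fun v =>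
    ((continuous_dirD_dirD hH v).mul hF.continuous).integrable_of_hasCompactSupport hc.mul_left
  simp only [lap, mul_add, add_mul]
  rw [integral_add (i1 _) (i1 _), integral_add (i2 _) (i2 _), integral_mul_dirD_dirD hH hF hc,
    integral_mul_dirD_dirD hH hF hc]

/-- The smoothed logarithmic kernel `½ log (|x - z|² + e)`. -/
noncomputable def regLog (e : ℝ) (z : ℂ) : ℂ → ℝ := fun x => Real.log (‖x - z‖ ^ 2 + e) / 2

lemma contDiff_regLog {e : ℝ} (he : 0 < e) (z : ℂ) : ContDiff ℝ 2 (regLog e z) := by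
  unfold regLog
  have h : ContDiff ℝ 2 fun x : ℂ => ‖x - z‖ ^ 2 + e :=
    ((contDiff_id.sub contDiff_const).norm_sq ℝ).add contDiff_const
  exact (h.log fun x => by positivity).div_const 2

lemma hasFDerivAt_q (e : ℝ) (z x : ℂ) :
    HasFDerivAt (fun x : ℂ => ‖x - z‖ ^ 2 + e) (2 • innerSL ℝ (x - z)) x := by
  have h := ((hasFDerivAt_id (𝕜 := ℝ) x).sub_const z).norm_sq.add_const e
  simpa using h

lemma dirD_regLog {e : ℝ} (he : 0 < e) (z v : ℂ) :
    dirD v (regLog e z) = fun x => inner ℝ (x - z) v * (‖x - z‖ ^ 2 + e)⁻¹ := by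
  funext x
  have hq : ‖x - z‖ ^ 2 + e ≠ 0 := by positivity
  have h := ((hasFDerivAt_q e z x).log hq).mul_const (2 : ℝ)⁻¹
  have h2 : HasFDerivAt (regLog e z) _ x := h
  rw [dirD, h2.fderiv]
  simp
  ring

lemma dirD_dirD_regLog {e : ℝ} (he : 0 < e) (z v x : ℂ) :
    dirD v (dirD v (regLog e z)) x = ‖v‖ ^ 2 * (‖x - z‖ ^ 2 + e)⁻¹ -
      2 * (inner ℝ (x - z) v) ^ 2 * ((‖x - z‖ ^ 2 + e) ^ 2)⁻¹ := by
  rw [dirD_regLog he, dirD]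
  have hq : ‖x - z‖ ^ 2 + e ≠ 0 := by positivity
  have h1 : HasFDerivAt (fun x : ℂ => inner ℝ (x - z) v) (innerSL ℝ v) x := by
    have := ((innerSL ℝ v).hasFDerivAt (x := x - z)).comp x ((hasFDerivAt_id x).sub_const z)
    simpa [Function.comp_def, real_inner_comm] using this
  have h2 := (hasDerivAt_inv hq).comp_hasFDerivAt x (hasFDerivAt_q e z x)
  have h3 := h1.mul h2
  have h4 := h3.fderiv
  simp only [Function.comp_def] at h4
  erw [h4]
  simp
  ring

lemma lap_regLog {e : ℝ} (he : 0 < e) (z x : ℂ) :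
    lap (regLog e z) x = 2 * e * ((‖x - z‖ ^ 2 + e) ^ 2)⁻¹ := by
  have hq : ‖x - z‖ ^ 2 + e ≠ 0 := by positivity
  have h1 : inner ℝ (x - z) 1 = (x - z).re := by simp [Complex.inner]
  have h2 : inner ℝ (x - z) Complex.I = (x - z).im := by simp [Complex.inner]; ring
  have h3 : ‖x - z‖ ^ 2 = (x - z).re ^ 2 + (x - z).im ^ 2 := by
    rw [← Complex.normSq_eq_norm_sq, Complex.normSq_apply]; ring
  rw [lap, dirD_dirD_regLog he, dirD_dirD_regLog he, h1, h2]
  simp only [norm_one, Complex.norm_I]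
  field_simp
  rw [h3]
  ring

/-! ### Compactly supported functions as logarithmic potentials -/

/-- The Cauchy-type profile whose rescalings are the Laplacians of the smoothed kernels. -/
noncomputable def profile (x : ℂ) : ℝ := 2 * ((‖x‖ ^ 2 + 1) ^ 2)⁻¹

lemma profile_pos (x : ℂ) : 0 < profile x := by unfold profile; positivity

lemma continuous_profile : Continuous profile := by
  unfold profile
  refine continuous_const.mul (Continuous.inv₀ (by fun_prop) fun x => ?_)
  positivity

lemma integrable_profile : Integrable profile := by
  have h := integrable_rpow_neg_one_add_norm_sq (E := ℂ) (μ := volume) (r := 4)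
    (by rw [Complex.finrank_real_complex]; norm_num)
  refine (h.const_mul 2).congr (Eventually.of_forall fun x => ?_)
  have : (0 : ℝ) ≤ 1 + ‖x‖ ^ 2 := by positivity
  simp only [profile]
  rw [show (-4 / 2 : ℝ) = -(2 : ℕ) by norm_num, Real.rpow_neg this, Real.rpow_natCast, add_comm]

lemma integral_profile_pos : 0 < ∫ x, profile x := by
  refine (integral_pos_iff_support_of_nonneg (fun x => (profile_pos x).le)
    integrable_profile).2 ?_
  have h : Function.support profile = Set.univ :=
    Set.eq_univ_of_forall fun x => (profile_pos x).ne'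
  simp [h]

lemma tendsto_profile :
    Tendsto (fun x : ℂ => ‖x‖ ^ 2 * profile x) (Bornology.cobounded ℂ) (nhds 0) := by
  have h1 : Tendsto (fun x : ℂ => 2 * (‖x‖ ^ 2)⁻¹) (Bornology.cobounded ℂ) (nhds (2 * 0)) :=
    ((tendsto_inv_atTop_zero.comp ((tendsto_pow_atTop two_ne_zero).comp
      tendsto_norm_cobounded_atTop))).const_mul 2
  rw [mul_zero] at h1
  refine squeeze_zero (fun x => mul_nonneg (by positivity) (profile_pos x).le) (fun x => ?_) h1
  rcases eq_or_ne x 0 with rfl | hx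
  · simp
  have hx : 0 < ‖x‖ := norm_pos_iff.2 hx
  unfold profile
  rw [← div_eq_mul_inv, ← div_eq_mul_inv, mul_div_assoc', div_le_div_iff₀ (by positivity)
    (by positivity)]
  nlinarith [sq_nonneg (‖x‖ ^ 2), sq_nonneg ‖x‖]

lemma tendsto_regLog {z x : ℂ} (h : x ≠ z) :
    Tendsto (fun c : ℝ => regLog (c ^ 2)⁻¹ z x) atTop (nhds (Real.log ‖z - x‖)) := by
  have hp : 0 < ‖x - z‖ := norm_pos_iff.2 (sub_ne_zero.2 h)
  have h1 : Tendsto (fun c : ℝ => ‖x - z‖ ^ 2 + (c ^ 2)⁻¹) atTop (nhds (‖x - z‖ ^ 2 + 0)) :=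
    tendsto_const_nhds.add (tendsto_inv_atTop_zero.comp (tendsto_pow_atTop two_ne_zero))
  have h2 := (h1.log (by positivity)).div_const 2
  have e : Real.log (‖x - z‖ ^ 2 + 0) / 2 = Real.log ‖z - x‖ := by
    rw [add_zero, Real.log_pow, norm_sub_rev]; push_cast; ring
  rw [e] at h2
  exact h2

lemma abs_regLog_le {e : ℝ} (he : 0 < e) (he1 : e ≤ 1) {z x : ℂ} (h : x ≠ z) :
    |regLog e z x| ≤ |Real.log ‖z - x‖| + Real.log (‖x - z‖ ^ 2 + 1) := by
  have hp : 0 < ‖x - z‖ := norm_pos_iff.2 (sub_ne_zero.2 h)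
  have h1 : Real.log (‖x - z‖ ^ 2 + e) ≤ Real.log (‖x - z‖ ^ 2 + 1) :=
    Real.log_le_log (by positivity) (by linarith)
  have h2 : Real.log (‖x - z‖ ^ 2) ≤ Real.log (‖x - z‖ ^ 2 + e) :=
    Real.log_le_log (by positivity) (by linarith)
  have h3 : 0 ≤ Real.log (‖x - z‖ ^ 2 + 1) := Real.log_nonneg (by nlinarith)
  rw [Real.log_pow] at h2
  push_cast at h2
  rw [norm_sub_rev z x, regLog]
  have := neg_abs_le (Real.log ‖x - z‖)
  have := abs_nonneg (Real.log ‖x - z‖)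
  rw [abs_le]
  constructor <;> linarith

/-- A `C²` function of compact support is, up to a constant, the logarithmic potential of its
Laplacian: the Laplacians of `regLog c⁻² z` form an approximate identity at `z`. -/
lemma integral_lap_mul_log {φ : ℂ → ℝ} (hφ : ContDiff ℝ 2 φ) (hc : HasCompactSupport φ) (z : ℂ) :
    ∫ x, lap φ x * Real.log ‖z - x‖ = (∫ x, profile x) * φ z := by
  set c0 := ∫ x, profile x with hc0
  have hpos : 0 < c0 := integral_profile_pos
  have hl := continuous_lap hφ
  have hlc := hasCompactSupport_lap hc
  -- Convergence of the mollified values.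
  have t1 := tendsto_integral_comp_smul_smul_of_integrable' (μ := (volume : Measure ℂ))
    (φ := fun x => c0⁻¹ * profile x)
    (fun x => mul_nonneg (inv_nonneg.2 hpos.le) (profile_pos x).le)
    (by rw [integral_const_mul, ← hc0, inv_mul_cancel₀ hpos.ne'])
    (by
      rw [Complex.finrank_real_complex]
      have := tendsto_profile.const_mul c0⁻¹
      rw [mul_zero] at this
      refine this.congr fun x => ?_
      ring)
    (hφ.continuous.integrable_of_hasCompactSupport hc) (x₀ := z) hφ.continuous.continuousAt
  rw [Complex.finrank_real_complex] at t1
  -- Convergence of the smoothed potentials.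
  have t2 : Tendsto (fun c : ℝ => ∫ x, regLog (c ^ 2)⁻¹ z x * lap φ x) atTop
      (nhds (∫ x, Real.log ‖z - x‖ * lap φ x)) := by
    refine tendsto_integral_filter_of_dominated_convergence
      (fun x => |lap φ x * Real.log ‖z - x‖| + |Real.log (‖x - z‖ ^ 2 + 1) * lap φ x|) ?_ ?_ ?_ ?_
    · filter_upwards [eventually_gt_atTop 0] with c hc
      exact ((contDiff_regLog (by positivity) z).continuous.mul hl).aestronglyMeasurable
    · filter_upwards [eventually_ge_atTop 1] with c hc
      have hz : ∀ᵐ x : ℂ, x ≠ z := by simp [ae_iff]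
      filter_upwards [hz] with x hx
      rw [Real.norm_eq_abs, abs_mul, abs_mul, abs_mul, ← mul_comm |lap φ x|,
        ← mul_comm |lap φ x|, ← mul_add]
      refine mul_le_mul_of_nonneg_left ?_ (abs_nonneg _)
      refine (abs_regLog_le (by positivity) (inv_le_one_of_one_le₀ (by nlinarith)) hx).trans ?_
      gcongr
      exact le_abs_self _
    · refine (integrable_log_sub_mul hl hlc z).abs.add (Integrable.abs ?_)
      refine Continuous.integrable_of_hasCompactSupport ?_ hlc.mul_left
      refine Continuous.mul (Continuous.log (by fun_prop) fun x => ?_) hl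
      positivity
    · have hz : ∀ᵐ x : ℂ, x ≠ z := by simp [ae_iff]
      filter_upwards [hz] with x hx
      exact (tendsto_regLog hx).mul_const _
  have t3 : Tendsto (fun c : ℝ => ∫ x, regLog (c ^ 2)⁻¹ z x * lap φ x) atTop
      (nhds (c0 * φ z)) := by
    refine (t1.const_mul c0).congr' ?_
    filter_upwards [eventually_gt_atTop 0] with c hc'
    rw [integral_mul_lap (contDiff_regLog (by positivity) z) hφ hc, ← integral_const_mul]
    refine integral_congr_ae (Eventually.of_forall fun x => ?_)
    have hn : ‖c • (z - x)‖ ^ 2 = c ^ 2 * ‖x - z‖ ^ 2 := by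
      rw [norm_smul, mul_pow, norm_sub_rev]; simp
    have h1 : c ^ 2 * ‖x - z‖ ^ 2 + 1 ≠ 0 := by positivity
    have h2 : ‖x - z‖ ^ 2 + (c ^ 2)⁻¹ = (c ^ 2 * ‖x - z‖ ^ 2 + 1) * (c ^ 2)⁻¹ := by
      field_simp
    simp only [smul_eq_mul]
    rw [lap_regLog (by positivity), profile, hn, h2]
    field_simp
  rw [← tendsto_nhds_unique t2 t3]
  simp only [mul_comm]

lemma integral_lap {φ : ℂ → ℝ} (hφ : ContDiff ℝ 2 φ) (hc : HasCompactSupport φ) :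
    ∫ x, lap φ x = 0 := by
  have h := integral_mul_lap (H := fun _ => (1 : ℝ)) contDiff_const hφ hc
  have h0 : lap (fun _ : ℂ => (1 : ℝ)) = 0 := by
    funext x
    have h1 : ∀ v, dirD v (fun _ : ℂ => (1 : ℝ)) = fun _ => 0 := fun v => by
      funext y; simp [dirD]
    simp only [lap, h1]
    simp [dirD]
  simpa [h0] using h

/-- Every `C²` function of compact support is the logarithmic potential of a continuous density
of compact support and total mass zero. -/
lemma exists_log_potential {φ : ℂ → ℝ} (hφ : ContDiff ℝ 2 φ) (hc : HasCompactSupport φ) :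
    ∃ ρ : ℂ → ℝ, Continuous ρ ∧ HasCompactSupport ρ ∧ ∫ x, ρ x = 0 ∧
      ∀ z, φ z = ∫ x, ρ x * Real.log ‖z - x‖ := by
  have hpos := integral_profile_pos
  refine ⟨fun x => (∫ y, profile y)⁻¹ * lap φ x, (continuous_lap hφ).const_mul _,
    (hasCompactSupport_lap hc).mul_left, ?_, fun z => ?_⟩
  · rw [integral_const_mul, integral_lap hφ hc, mul_zero]
  · simp only [mul_assoc]
    rw [integral_const_mul, integral_lap_mul_log hφ hc, inv_mul_cancel_left₀ hpos.ne']

/-! ### Potentials of equilibrium measures -/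

/-- Normalised Lebesgue measure on the unit disc has logarithmic potential bounded below. -/
lemma exists_reference_measure : ∃ ν : Measure ℂ, IsProbabilityMeasure ν ∧
    ν (Metric.closedBall 0 1)ᶜ = 0 ∧ ν ≪ volume ∧
    (∃ h : ℂ → ℝ≥0∞, (∃ B : ℝ≥0∞, B < ⊤ ∧ ∀ z, h z ≤ B) ∧ ν = volume.withDensity h) ∧
    (∀ y, Integrable (fun z => Real.log ‖z - y‖) ν) ∧
    ∃ C' : ℝ, 0 ≤ C' ∧ ∀ y, -C' ≤ ∫ z, Real.log ‖z - y‖ ∂ν := by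
  set b : Set ℂ := Metric.ball 0 1 with hb
  have hbm : MeasurableSet b := Metric.isOpen_ball.measurableSet
  have hb0 : volume b ≠ 0 := (Metric.measure_ball_pos volume 0 one_pos).ne'
  have hbt : volume b ≠ ⊤ := measure_ball_lt_top.ne
  set a : ℝ≥0∞ := (volume b)⁻¹ with ha
  have hat : a ≠ ⊤ := ENNReal.inv_ne_top.2 hb0
  have hlogi : ∀ y, IntegrableOn (fun z => Real.log ‖z - y‖) b := fun y => by
    have := integrableOn_log_sub (K := b) Metric.isBounded_ball y
    simpa only [norm_sub_rev] using this
  have hL := (integrable_indicator_iff hbm).2 (integrableOn_log_norm_ball 1).abs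
  set L : ℂ → ℝ := b.indicator fun x => |Real.log ‖x‖| with hLdef
  have hL0 : ∀ x, 0 ≤ L x := fun x => Set.indicator_nonneg (fun _ _ => abs_nonneg _) _
  refine ⟨a • volume.restrict b, ⟨?_⟩, ?_, ?_, ⟨b.indicator fun _ => a, ⟨a, hat.lt_top, ?_⟩, ?_⟩,
    fun y => (hlogi y).smul_measure hat, a.toReal * ∫ x, L x, ?_, fun y => ?_⟩
  · simp [ha, ENNReal.inv_mul_cancel hb0 hbt]
  · have : volume ((Metric.closedBall (0 : ℂ) 1)ᶜ ∩ b) = 0 := by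
      rw [Set.inter_comm, ← Set.sdiff_eq, Set.sdiff_eq_empty.2 Metric.ball_subset_closedBall]
      simp
    simp [Measure.restrict_apply Metric.isClosed_closedBall.measurableSet.compl, this]
  · exact (Measure.smul_absolutelyContinuous).trans Measure.restrict_le_self.absolutelyContinuous
  · intro z
    exact Set.indicator_le_self' (fun _ _ => zero_le) z
  · rw [withDensity_indicator hbm, withDensity_const]
  · exact mul_nonneg ENNReal.toReal_nonneg (integral_nonneg hL0)
  · rw [integral_smul_measure, smul_eq_mul, ← mul_neg]
    refine mul_le_mul_of_nonneg_left ?_ ENNReal.toReal_nonneg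
    have h1 : ∫ x in b, L (y - x) ≤ ∫ x, L x := by
      rw [← integral_sub_left_eq_self L volume y]
      exact setIntegral_le_integral (hL.comp_sub_left y) (Eventually.of_forall fun x => hL0 _)
    refine (neg_le_neg h1).trans ?_
    rw [← integral_neg]
    refine integral_mono (hL.comp_sub_left y).integrableOn.neg (hlogi y) fun x => ?_
    simp only [hLdef]
    by_cases hx : y - x ∈ b
    · rw [Set.indicator_of_mem hx, norm_sub_rev]
      exact neg_abs_le _
    · rw [Set.indicator_of_notMem hx, neg_zero, norm_sub_rev]
      rw [hb, mem_ball_zero_iff, not_lt] at hx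
      exact Real.log_nonneg hx

lemma Lam_iter_bdd {f g : Polynomial ℂ} (hf : 0 < f.degree) {φ : ℂ → ℝ} {M : ℝ}
    (h : ∀ z, |φ z| ≤ M) (n : ℕ) (z : ℂ) : |(Lam f g)^[n] φ z| ≤ M :=
  (Lam_iter_abs_le φ n z).trans
    ((Lam_iter_mono n z fun y _ => h y).trans_eq (Lam_iter_const hf n M z))

lemma integrable_of_bdd {m : Measure ℂ} [IsFiniteMeasure m] {φ : ℂ → ℝ} (hφ : Continuous φ)
    {M : ℝ} (h : ∀ z, |φ z| ≤ M) : Integrable φ m :=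
  Integrable.of_bound hφ.aestronglyMeasurable M (Eventually.of_forall h)

/-- An equilibrium measure is invariant under the dual of `Λ`. -/
lemma integral_Lam_iter {f g : Polynomial ℂ} (hf : 0 < f.degree) {μ : Measure ℂ}
    (hμ : IsEquilibrium f g μ) {φ : ℂ → ℝ} (hφ : Continuous φ) {M : ℝ} (h : ∀ z, |φ z| ≤ M)
    (n : ℕ) : ∫ z, (Lam f g)^[n] φ z ∂μ = ∫ z, φ z ∂μ := by
  obtain ⟨ν, h1, h2, -, h4, -⟩ := exists_reference_measure
  have key := hμ.2.2 ν h1 ⟨_, isCompact_closedBall 0 1, h2⟩ h4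
  have t1 := key _ (continuous_Lam_iter (g := g) hf hφ n) ⟨M, fun z => Lam_iter_bdd hf h n z⟩
  have t2 := (key φ hφ ⟨M, h⟩).comp (tendsto_add_atTop_nat n)
  refine tendsto_nhds_unique t1 (t2.congr fun k => ?_)
  simp only [Function.comp_apply, Function.iterate_add_apply]

lemma ae_notMem_backImg {f g : Polynomial ℂ} (hf : 0 < f.degree) (hg : 0 < g.degree)
    {ν : Measure ℂ} (hν : ν ≪ volume) (n : ℕ) (x : ℂ) : ∀ᵐ z ∂ν, x ∉ backImg f g n z := by
  refine hν ?_
  have : {z | ¬ x ∉ backImg f g n z} = ((backImg g f n x).toFinset : Set ℂ) := by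
    ext z
    simp [mem_backImg_iff hf hg]
  change volume {z | ¬ x ∉ backImg f g n z} = 0
  rw [this]
  exact (Finset.finite_toSet _).measure_zero _

/-- Logarithm truncated below at scale `ε` and above at height `T`. -/
noncomputable def truncLog (x : ℂ) (T ε : ℝ) (z : ℂ) : ℝ := min (Real.log (max ‖z - x‖ ε)) T

lemma continuous_truncLog (x : ℂ) (T : ℝ) {ε : ℝ} (hε : 0 < ε) : Continuous (truncLog x T ε) := by
  unfold truncLog
  refine Continuous.min (Continuous.log (by fun_prop) fun z => ?_) continuous_const
  exact (lt_max_of_lt_right hε).ne'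

lemma abs_truncLog_le (x : ℂ) (T : ℝ) {ε : ℝ} (hε : 0 < ε) (z : ℂ) :
    |truncLog x T ε z| ≤ |Real.log ε| + |T| := by
  have h1 : Real.log ε ≤ Real.log (max ‖z - x‖ ε) := Real.log_le_log hε (le_max_right _ _)
  have := abs_nonneg (Real.log ε)
  have := abs_nonneg T
  have := neg_abs_le (Real.log ε)
  have := neg_abs_le T
  have := le_abs_self T
  rw [abs_le, truncLog]
  refine ⟨le_min (by linarith) (by linarith), (min_le_right _ _).trans (by linarith)⟩

/-- Duality transfers the lower bound on the potential of the reference measure to `μ`. -/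
lemma exists_truncated_energy {f g : Polynomial ℂ} (hdeg : g.degree < f.degree)
    (hg : 0 < g.degree) {μ : Measure ℂ} (hμ : IsEquilibrium f g μ) :
    ∃ R C₀ : ℝ, 1 ≤ R ∧ 0 ≤ C₀ ∧ (∀ᵐ z ∂μ, ‖z‖ ≤ R) ∧ ∀ x T ε, 0 < ε →
      Real.log (R + ‖x‖) ≤ T → -C₀ ≤ ∫ z, truncLog x T ε z ∂μ := by
  have hf : 0 < f.degree := hg.trans hdeg
  have hgn : 0 < g.natDegree := natDegree_pos_iff_degree_pos.2 hg
  have hfg : g.natDegree < f.natDegree := natDegree_lt_natDegree (ne_zero_of_degree_gt hg) hdeg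
  obtain ⟨R₀, hR₀⟩ := exists_disc hdeg
  obtain ⟨hμp, ⟨K, hK, hKμ⟩, hlim⟩ := hμ
  obtain ⟨r, hr⟩ := hK.isBounded.subset_closedBall (0 : ℂ)
  obtain ⟨ν, hν, h2, hac, h4, hlogi, C', hC', hlow⟩ := exists_reference_measure
  obtain ⟨B, hB⟩ := resConst_bound hfg hf hg
  have hB0 : 0 ≤ B := (abs_nonneg _).trans (hB 0)
  set R := max (max 1 R₀) r with hR
  have hR1 : 1 ≤ R := (le_max_left _ _).trans (le_max_left _ _)
  have hRR : R₀ ≤ R := (le_max_right _ _).trans (le_max_left _ _)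
  have hl : ((f.natDegree : ℝ) / g.natDegree)⁻¹ ≤ 1 := by
    rw [inv_div]
    exact div_le_one_of_le₀ (by exact_mod_cast hfg.le) (by positivity)
  refine ⟨R, B + C', hR1, by positivity, ?_, fun x T ε hε hT => ?_⟩
  · refine measure_mono_null (fun z hz => ?_) hKμ
    intro hzK
    exact hz ((mem_closedBall_zero_iff.1 (hr hzK)).trans (le_max_right _ _))
  have hc := continuous_truncLog x T hε
  have hb := abs_truncLog_le x T hε
  refine ge_of_tendsto' (hlim ν hν ⟨_, isCompact_closedBall 0 1, h2⟩ h4 _ hc ⟨_, hb⟩) fun n => ?_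
  obtain ⟨i1, i2⟩ := Lam_iter_integral (m := ν) g f n x (fun z y => Real.log ‖z - y‖)
    fun y _ => hlogi y
  have hae : ∀ᵐ z ∂ν, ‖z‖ ≤ R := by
    refine measure_mono_null (fun z hz => ?_) h2
    intro hzK
    exact hz ((mem_closedBall_zero_iff.1 hzK).trans hR1)
  have hcmp : ∀ᵐ z ∂ν, ((f.natDegree : ℝ) ^ n)⁻¹ * Real.log (resConst f g n) +
      ((f.natDegree : ℝ) / g.natDegree)⁻¹ ^ n *
        (Lam g f)^[n] (fun y => Real.log ‖z - y‖) x ≤ (Lam f g)^[n] (truncLog x T ε) z := by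
    filter_upwards [hae, ae_notMem_backImg hf hg hac n x] with z hz hxz
    rw [← Lam_log hf hg n hxz]
    refine Lam_iter_mono n z fun y hy => ?_
    have hyx : y ≠ x := fun h => hxz (h ▸ hy)
    have hp : 0 < ‖y - x‖ := norm_pos_iff.2 (sub_ne_zero.2 hyx)
    refine le_min (Real.log_le_log hp (le_max_left _ _)) ((Real.log_le_log hp ?_).trans hT)
    have := hR₀ R hRR n z hz y hy
    exact (norm_sub_le _ _).trans (by linarith)
  have h5 := integral_mono_ae ((integrable_const _).add (i1.const_mul _))
    (integrable_of_bdd (continuous_Lam_iter hf hc n) (Lam_iter_bdd hf hb n)) hcmp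
  refine le_trans ?_ h5
  simp only [Pi.add_apply]
  rw [integral_add (integrable_const _) (i1.const_mul _), integral_const_mul (((f.natDegree : ℝ) / g.natDegree)⁻¹ ^ n), i2]
  simp only [integral_const, probReal_univ, one_smul]
  have h6 : -C' ≤ (Lam g f)^[n] (fun y => ∫ z, Real.log ‖z - y‖ ∂ν) x := by
    rw [← Lam_iter_const (f := g) (g := f) hg n (-C') x]
    exact Lam_iter_mono n x fun y _ => hlow y
  have h7 : ((f.natDegree : ℝ) / g.natDegree)⁻¹ ^ n ≤ 1 := pow_le_one₀ (by positivity) hl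
  have h8 : 0 ≤ ((f.natDegree : ℝ) / g.natDegree)⁻¹ ^ n := by positivity
  have h9 := mul_le_mul_of_nonneg_left h6 h8
  have h10 := (abs_le.1 (hB n)).1
  nlinarith

/-- The logarithmic potential of an equilibrium measure is finite everywhere and bounded below. -/
lemma exists_energy {f g : Polynomial ℂ} (hdeg : g.degree < f.degree)
    (hg : 0 < g.degree) {μ : Measure ℂ} (hμ : IsEquilibrium f g μ) :
    ∃ R C₀ : ℝ, 1 ≤ R ∧ 0 ≤ C₀ ∧ (∀ᵐ z ∂μ, ‖z‖ ≤ R) ∧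
      ∀ x, Integrable (fun z => Real.log ‖z - x‖) μ ∧ -C₀ ≤ ∫ z, Real.log ‖z - x‖ ∂μ := by
  obtain ⟨R, C₀, hR, hC₀, hae, hen⟩ := exists_truncated_energy hdeg hg hμ
  have := hμ.1
  refine ⟨R, C₀, hR, hC₀, hae, fun x => ?_⟩
  set T := Real.log (R + ‖x‖) with hT
  have hT0 : 0 ≤ T := Real.log_nonneg (by linarith [norm_nonneg x])
  have hm : Measurable fun z : ℂ => Real.log ‖z - x‖ :=
    Real.measurable_log.comp (by fun_prop)
  let ε : ℕ → ℝ := fun k => 1 / ((k : ℝ) + 1)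
  have hε : ∀ k, 0 < ε k := fun k => by positivity
  have hε1 : ∀ k, ε k ≤ 1 := fun k => by
    simp only [ε]
    rw [div_le_one (by positivity)]
    linarith [k.cast_nonneg (α := ℝ)]
  have hεt : Tendsto ε atTop (nhds 0) := tendsto_one_div_add_atTop_nhds_zero_nat
  -- Fatou's lemma as the lower truncation is removed.
  have hfat : ∫⁻ z, ENNReal.ofReal (T - Real.log ‖z - x‖) ∂μ ≤ ENNReal.ofReal (T + C₀) := by
    calc ∫⁻ z, ENNReal.ofReal (T - Real.log ‖z - x‖) ∂μ
        ≤ ∫⁻ z, liminf (fun k => ENNReal.ofReal (T - truncLog x T (ε k) z)) atTop ∂μ := by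
          refine lintegral_mono fun z => le_liminf_of_le (by isBoundedDefault) ?_
          have hev : ∀ᶠ k in atTop, Real.log (max ‖z - x‖ (ε k)) ≤ Real.log ‖z - x‖ := by
            rcases eq_or_ne z x with rfl | hzx
            · refine Eventually.of_forall fun k => ?_
              simp only [sub_self, norm_zero, Real.log_zero]
              rw [max_eq_right (hε k).le]
              exact Real.log_nonpos (hε k).le (hε1 k)
            · have hp : 0 < ‖z - x‖ := norm_pos_iff.2 (sub_ne_zero.2 hzx)
              filter_upwards [hεt.eventually (gt_mem_nhds hp)] with k hk
              rw [max_eq_left hk.le]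
          filter_upwards [hev] with k hk
          refine ENNReal.ofReal_le_ofReal (sub_le_sub_left ?_ _)
          exact (min_le_left _ _).trans hk
      _ ≤ liminf (fun k => ∫⁻ z, ENNReal.ofReal (T - truncLog x T (ε k) z) ∂μ) atTop :=
          lintegral_liminf_le fun k => (measurable_const.sub
            (continuous_truncLog x T (hε k)).measurable).ennreal_ofReal
      _ ≤ ENNReal.ofReal (T + C₀) := by
          refine liminf_le_of_le (by isBoundedDefault) fun b hb => ?_
          obtain ⟨k, hk⟩ := hb.exists
          refine hk.trans ?_
          have hi : Integrable (truncLog x T (ε k)) μ :=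
            integrable_of_bdd (continuous_truncLog x T (hε k)) (abs_truncLog_le x T (hε k))
          have hi' : Integrable (fun z => T - truncLog x T (ε k) z) μ :=
            (integrable_const T).sub hi
          rw [← ofReal_integral_eq_lintegral_ofReal hi'
            (Eventually.of_forall fun z => sub_nonneg.2 (min_le_right _ _))]
          refine ENNReal.ofReal_le_ofReal ?_
          rw [integral_sub (integrable_const T) hi]
          simp only [integral_const, probReal_univ, one_smul]
          linarith [hen x T (ε k) (hε k) le_rfl]
  have hnn : 0 ≤ᵐ[μ] fun z => T - Real.log ‖z - x‖ := by
    filter_upwards [hae] with z hz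
    refine sub_nonneg.2 ?_
    rcases eq_or_ne z x with rfl | hzx
    · simpa using hT0
    · have hp : 0 < ‖z - x‖ := norm_pos_iff.2 (sub_ne_zero.2 hzx)
      exact Real.log_le_log hp ((norm_sub_le _ _).trans (by linarith))
  have hms : AEStronglyMeasurable (fun z => T - Real.log ‖z - x‖) μ :=
    (measurable_const.sub hm).aestronglyMeasurable
  have hI : Integrable (fun z => T - Real.log ‖z - x‖) μ :=
    (lintegral_ofReal_ne_top_iff_integrable hms hnn).1
      (hfat.trans_lt ENNReal.ofReal_lt_top).ne
  have hI2 : Integrable (fun z => Real.log ‖z - x‖) μ :=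
    ((integrable_const T).sub hI).congr (Eventually.of_forall fun z => by simp)
  refine ⟨hI2, ?_⟩
  rw [← ofReal_integral_eq_lintegral_ofReal hI hnn, ENNReal.ofReal_le_ofReal_iff (by positivity),
    integral_sub (integrable_const T) hI2] at hfat
  simp only [integral_const, probReal_univ, one_smul] at hfat
  linarith

/-- Uniform `L¹(μ)` bound for the logarithmic kernel normalised by its growth in the pole. -/
lemma exists_kernel_bound {f g : Polynomial ℂ} (hdeg : g.degree < f.degree)
    (hg : 0 < g.degree) {μ : Measure ℂ} (hμ : IsEquilibrium f g μ) :
    ∃ B : ℝ, 0 ≤ B ∧ ∀ x, Integrable (fun z => Real.log ‖z - x‖ - Real.posLog ‖x‖) μ ∧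
      ∫ z, |Real.log ‖z - x‖ - Real.posLog ‖x‖| ∂μ ≤ B := by
  obtain ⟨R, C₀, hR, hC₀, hae, hen⟩ := exists_energy hdeg hg hμ
  have := hμ.1
  have hT : 0 ≤ Real.log (R + 1) := Real.log_nonneg (by linarith)
  have h2R : 0 ≤ Real.log (2 * R) := Real.log_nonneg (by linarith)
  have hl2 : 0 ≤ Real.log 2 := Real.log_nonneg (by norm_num)
  refine ⟨2 * Real.log (R + 1) + C₀ + Real.log (2 * R) + Real.log 2, by positivity, fun x => ?_⟩
  obtain ⟨hi, hlow⟩ := hen x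
  have hi2 : Integrable (fun z => Real.log ‖z - x‖ - Real.posLog ‖x‖) μ :=
    hi.sub (integrable_const _)
  refine ⟨hi2, ?_⟩
  rcases le_or_gt ‖x‖ (2 * R) with hx | hx
  · have hpl : Real.posLog ‖x‖ ≤ Real.log (2 * R) := by
      rw [Real.posLog_def]
      refine max_le h2R ?_
      rcases eq_or_ne x 0 with rfl | h0
      · simpa using h2R
      · exact Real.log_le_log (norm_pos_iff.2 h0) hx
    have hpl0 : 0 ≤ Real.posLog ‖x‖ := Real.posLog_nonneg
    have hbd : ∀ᵐ z ∂μ, |Real.log ‖z - x‖ - Real.posLog ‖x‖| ≤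
        2 * Real.log (R + 1) - (Real.log ‖z - x‖ - Real.posLog ‖x‖) := by
      filter_upwards [hae] with z hz
      have hV : Real.log ‖z - x‖ - Real.posLog ‖x‖ ≤ Real.log (R + 1) := by
        rcases eq_or_ne z x with rfl | hzx
        · simp; linarith
        have hp : 0 < ‖z - x‖ := norm_pos_iff.2 (sub_ne_zero.2 hzx)
        have hR0 : 0 < R := by linarith
        have h1 : ‖z - x‖ ≤ R + ‖x‖ := (norm_sub_le _ _).trans (by linarith)
        rw [sub_le_iff_le_add, Real.posLog_eq_log_max_one (norm_nonneg x),
          ← Real.log_mul (by positivity) (lt_max_of_lt_left one_pos).ne']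
        refine Real.log_le_log hp (h1.trans ?_)
        nlinarith [le_max_left 1 ‖x‖, le_max_right 1 ‖x‖]
      rw [abs_le]
      constructor <;> linarith
    have h3 := integral_mono_ae hi2.abs ((integrable_const _).sub hi2) hbd
    simp only [Pi.sub_apply] at h3
    rw [integral_sub (integrable_const _) hi2, integral_sub hi (integrable_const _)] at h3
    simp only [integral_const, probReal_univ, one_smul] at h3
    linarith
  · have hbd : ∀ᵐ z ∂μ, |Real.log ‖z - x‖ - Real.posLog ‖x‖| ≤ Real.log 2 := by
      filter_upwards [hae] with z hz
      have hx1 : 1 ≤ ‖x‖ := by linarith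
      have hx0 : 0 < ‖x‖ := by linarith
      have h1 : ‖z - x‖ ≤ 2 * ‖x‖ := (norm_sub_le _ _).trans (by linarith)
      have h2 : ‖x‖ / 2 ≤ ‖z - x‖ := by
        have := norm_sub_norm_le x z
        rw [norm_sub_rev x z] at this
        linarith
      have h3 := Real.log_le_log ((half_pos hx0).trans_le h2) h1
      have h4 := Real.log_le_log (by positivity) h2
      rw [Real.log_mul (by norm_num) hx0.ne'] at h3
      rw [Real.log_div hx0.ne' (by norm_num)] at h4
      rw [Real.posLog_eq_log (by rwa [abs_of_pos hx0]), abs_le]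
      constructor <;> linarith
    have h3 := integral_mono_ae hi2.abs (integrable_const _) hbd
    simp only [integral_const, probReal_univ, one_smul] at h3
    linarith

/-! ### Exponential mixing -/

/-- The logarithmic kernel normalised by its growth in the pole. -/
noncomputable def logKer (z x : ℂ) : ℝ := Real.log ‖z - x‖ - Real.posLog ‖x‖

lemma measurable_logKer : Measurable (Function.uncurry logKer) := by
  have h1 : Measurable fun p : ℂ × ℂ => Real.log ‖p.1 - p.2‖ :=
    Real.measurable_log.comp (by fun_prop)
  have h2 : Measurable fun p : ℂ × ℂ => Real.posLog ‖p.2‖ :=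
    (Real.continuous_posLog.comp (continuous_norm.comp continuous_snd)).measurable
  exact h1.sub h2

/-- Up to a constant independent of `z`, the iterate `Λⁿφ(z)` is `l⁻ⁿ` times a potential formed
with the pushed-forward kernel. -/
lemma exists_iter_eq {f g : Polynomial ℂ} (hf : 0 < f.degree) (hg : 0 < g.degree)
    {φ ρ : ℂ → ℝ} (hρ : Continuous ρ) (hρc : HasCompactSupport ρ) (hρ0 : ∫ x, ρ x = 0)
    (hpot : ∀ z, φ z = ∫ x, ρ x * Real.log ‖z - x‖) (n : ℕ) :
    ∃ κ : ℝ, ∀ z, (Lam f g)^[n] φ z - κ =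
      ((f.natDegree : ℝ) / g.natDegree)⁻¹ ^ n * ∫ ζ, ρ ζ * (Lam g f)^[n] (logKer z) ζ := by
  set t := ((f.natDegree : ℝ) / g.natDegree)⁻¹ ^ n with ht
  set c := ((f.natDegree : ℝ) ^ n)⁻¹ * Real.log (resConst f g n) with hc
  have hpl : Continuous fun x : ℂ => Real.posLog ‖x‖ :=
    Real.continuous_posLog.comp continuous_norm
  have hP := continuous_Lam_iter (f := g) (g := f) hg hpl n
  refine ⟨∫ ζ, t * (ρ ζ * (Lam g f)^[n] (fun x => Real.posLog ‖x‖) ζ), fun z => ?_⟩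
  obtain ⟨i1, i2⟩ := Lam_iter_integral (m := volume) f g n z (fun ζ y => ρ ζ * Real.log ‖y - ζ‖)
    fun y _ => integrable_log_sub_mul hρ hρc y
  have e1 : (Lam f g)^[n] φ z =
      ∫ ζ, (Lam f g)^[n] (fun y => ρ ζ * Real.log ‖y - ζ‖) z := by
    rw [i2, funext hpot]
  have j1 : Integrable fun ζ => ρ ζ * c :=
    (hρ.integrable_of_hasCompactSupport hρc).mul_const c
  have j2 : Integrable fun ζ => t * (ρ ζ * (Lam g f)^[n] (fun x => Real.posLog ‖x‖) ζ) :=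
    ((hρ.mul hP).integrable_of_hasCompactSupport hρc.mul_right).const_mul t
  have e2 : ∫ ζ, ρ ζ * c = 0 := by rw [integral_mul_const, hρ0, zero_mul]
  have e3 : (Lam f g)^[n] φ z =
      ∫ ζ, ((Lam f g)^[n] (fun y => ρ ζ * Real.log ‖y - ζ‖) z - ρ ζ * c) := by
    rw [integral_sub i1 j1, e2, sub_zero, e1]
  have j3 : Integrable fun ζ =>
      (Lam f g)^[n] (fun y => ρ ζ * Real.log ‖y - ζ‖) z - ρ ζ * c := i1.sub j1
  rw [e3, ← integral_sub j3 j2, ← integral_const_mul]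
  refine integral_congr_ae ?_
  have hae : ∀ᵐ ζ : ℂ, ζ ∉ backImg f g n z := by
    have : {ζ | ¬ ζ ∉ backImg f g n z} = ((backImg f g n z).toFinset : Set ℂ) := by
      ext ζ; simp
    change volume {ζ | ¬ ζ ∉ backImg f g n z} = 0
    rw [this]
    exact (Finset.finite_toSet _).measure_zero _
  filter_upwards [hae] with ζ hζ
  have e4 : (Lam g f)^[n] (logKer z) ζ = (Lam g f)^[n] (fun x => Real.log ‖z - x‖) ζ -
      (Lam g f)^[n] (fun x => Real.posLog ‖x‖) ζ := Lam_iter_sub _ _ n ζ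
  rw [Lam_iter_mul, Lam_log hf hg n hζ, e4]
  ring

/-- Fubini turns the uniform kernel bound into an `L¹(μ)` bound for the potentials. -/
lemma integral_abs_potential_le {f g : Polynomial ℂ} (hg : 0 < g.degree) {μ : Measure ℂ}
    [IsProbabilityMeasure μ] {ρ : ℂ → ℝ} (hρ : Continuous ρ) (hρc : HasCompactSupport ρ) {B : ℝ}
    (hB : ∀ x, Integrable (fun z => logKer z x) μ ∧ ∫ z, |logKer z x| ∂μ ≤ B) (n : ℕ) :
    Integrable (fun z => ∫ ζ, ρ ζ * (Lam g f)^[n] (logKer z) ζ) μ ∧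
      ∫ z, |∫ ζ, ρ ζ * (Lam g f)^[n] (logKer z) ζ| ∂μ ≤ B * ∫ ζ, |ρ ζ| := by
  have hm : Measurable (Function.uncurry fun z ζ => ρ ζ * (Lam g f)^[n] (logKer z) ζ) :=
    (hρ.measurable.comp measurable_snd).mul (measurable_Lam_iter hg measurable_logKer n)
  have hi : ∀ ζ, Integrable (fun z => ρ ζ * (Lam g f)^[n] (logKer z) ζ) μ := fun ζ =>
    (Lam_iter_integral (m := μ) g f n ζ logKer fun y _ => (hB y).1).1.const_mul _
  have hb : ∀ ζ, ∫ z, |ρ ζ * (Lam g f)^[n] (logKer z) ζ| ∂μ ≤ B * |ρ ζ| := fun ζ => by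
    obtain ⟨k1, k2⟩ := Lam_iter_integral (m := μ) g f n ζ (fun z y => |logKer z y|)
      fun y _ => (hB y).1.abs
    simp only [abs_mul]
    rw [integral_const_mul, mul_comm B]
    refine mul_le_mul_of_nonneg_left ?_ (abs_nonneg _)
    refine (integral_mono (Lam_iter_integral (m := μ) g f n ζ logKer fun y _ => (hB y).1).1.abs k1
      fun z => Lam_iter_abs_le _ n ζ).trans ?_
    rw [k2]
    exact (Lam_iter_mono n ζ fun y _ => (hB y).2).trans_eq (Lam_iter_const hg n B ζ)
  have hρi : Integrable fun ζ => B * |ρ ζ| :=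
    (hρ.integrable_of_hasCompactSupport hρc).abs.const_mul B
  have hI : Integrable (Function.uncurry fun z ζ => ρ ζ * (Lam g f)^[n] (logKer z) ζ)
      (μ.prod volume) := by
    rw [integrable_prod_iff' hm.aestronglyMeasurable]
    refine ⟨Eventually.of_forall hi, hρi.mono' ?_ (Eventually.of_forall fun ζ => ?_)⟩
    · exact (hm.norm.comp measurable_swap).stronglyMeasurable.integral_prod_right'.aestronglyMeasurable
    · rw [Real.norm_of_nonneg (integral_nonneg fun _ => norm_nonneg _)]
      exact hb ζ
  have hIa : Integrable (Function.uncurry fun z ζ => |ρ ζ * (Lam g f)^[n] (logKer z) ζ|)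
      (μ.prod volume) := hI.abs
  have hI2 : Integrable (fun z => ∫ ζ, ρ ζ * (Lam g f)^[n] (logKer z) ζ) μ :=
    hI.integral_prod_left
  have hI3 : Integrable (fun z => ∫ ζ, |ρ ζ * (Lam g f)^[n] (logKer z) ζ|) μ :=
    hIa.integral_prod_left
  have hI4 : Integrable (fun ζ => ∫ z, |ρ ζ * (Lam g f)^[n] (logKer z) ζ| ∂μ) :=
    hIa.integral_prod_right
  have hle : ∀ z, |∫ ζ, ρ ζ * (Lam g f)^[n] (logKer z) ζ| ≤
      ∫ ζ, |ρ ζ * (Lam g f)^[n] (logKer z) ζ| := fun z => abs_integral_le_integral_abs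
  refine ⟨hI2, ?_⟩
  calc ∫ z, |∫ ζ, ρ ζ * (Lam g f)^[n] (logKer z) ζ| ∂μ
      ≤ ∫ z, (∫ ζ, |ρ ζ * (Lam g f)^[n] (logKer z) ζ|) ∂μ := integral_mono hI2.abs hI3 hle
    _ = ∫ ζ, ∫ z, |ρ ζ * (Lam g f)^[n] (logKer z) ζ| ∂μ := integral_integral_swap hIa
    _ ≤ ∫ ζ, B * |ρ ζ| := integral_mono hI4 hρi hb
    _ = B * ∫ ζ, |ρ ζ| := integral_const_mul _ _

theorem equilibrium_measure_exponential_mixing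
    (f g : Polynomial ℂ) (hdeg : g.degree < f.degree) (hg : 1 ≤ g.degree)
    (μ : Measure ℂ) (hμ : IsEquilibrium f g μ)
    (φ : ℂ → ℝ) (hφ : ContDiff ℝ 2 φ) (hφc : HasCompactSupport φ) :
    ∃ c : ℝ, 0 < c ∧ ∀ n : ℕ, ∀ ψ : ℂ → ℝ, Measurable ψ → ∀ M : ℝ,
      (∀ z, |ψ z| ≤ M) →
      |∫ z, ((Lam f g)^[n] φ) z * ψ z ∂μ - (∫ z, φ z ∂μ) * (∫ z, ψ z ∂μ)| ≤
        c * ((f.natDegree : ℝ) / (g.natDegree : ℝ))⁻¹ ^ n * M := by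
  have hg' : 0 < g.degree := zero_lt_one.trans_le hg
  have hf : 0 < f.degree := hg'.trans hdeg
  have := hμ.1
  obtain ⟨ρ, hρ, hρc, hρ0, hpot⟩ := exists_log_potential hφ hφc
  obtain ⟨B, hB0, hB⟩ := exists_kernel_bound hdeg hg' hμ
  obtain ⟨Mφ, hMφ⟩ := hφc.exists_bound_of_continuous hφ.continuous
  set D := B * ∫ ζ, |ρ ζ| with hD
  have hD0 : 0 ≤ D := mul_nonneg hB0 (integral_nonneg fun _ => abs_nonneg _)
  refine ⟨2 * D + 1, by positivity, fun n ψ hψ M hM => ?_⟩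
  have hM0 : 0 ≤ M := (abs_nonneg _).trans (hM 0)
  set t := ((f.natDegree : ℝ) / g.natDegree)⁻¹ ^ n with ht
  have ht0 : 0 ≤ t := by positivity
  obtain ⟨κ, hκ⟩ := exists_iter_eq hf hg' hρ hρc hρ0 hpot n
  obtain ⟨hPi, hPb⟩ := integral_abs_potential_le (f := f) hg' hρ hρc hB n
  have hinv := integral_Lam_iter hf hμ hφ.continuous hMφ n
  have hFi : Integrable ((Lam f g)^[n] φ) μ :=
    integrable_of_bdd (continuous_Lam_iter hf hφ.continuous n) (Lam_iter_bdd hf hMφ n)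
  set m := ∫ z, φ z ∂μ with hm
  have hκi : Integrable (fun z => (Lam f g)^[n] φ z - κ) μ := hFi.sub (integrable_const κ)
  have hκb : ∫ z, |(Lam f g)^[n] φ z - κ| ∂μ ≤ t * D := by
    simp only [hκ, abs_mul]
    rw [integral_const_mul, ← ht, abs_of_nonneg ht0]
    exact mul_le_mul_of_nonneg_left hPb ht0
  -- Invariance of `μ` identifies the constant `κ` with the mean of `φ` up to the same error.
  have hmκ : |κ - m| ≤ t * D := by
    have e : ∫ z, ((Lam f g)^[n] φ z - κ) ∂μ = m - κ := by
      rw [integral_sub hFi (integrable_const κ), hinv]; simp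
    rw [abs_sub_comm, ← e]
    exact abs_integral_le_integral_abs.trans hκb
  have hψi : Integrable ψ μ :=
    Integrable.of_bound hψ.aestronglyMeasurable M (Eventually.of_forall hM)
  have hFψ : Integrable (fun z => (Lam f g)^[n] φ z * ψ z) μ :=
    hFi.mul_bdd hψ.aestronglyMeasurable (Eventually.of_forall hM)
  have e : ∫ z, (Lam f g)^[n] φ z * ψ z ∂μ - m * ∫ z, ψ z ∂μ =
      ∫ z, ((Lam f g)^[n] φ z - m) * ψ z ∂μ := by
    rw [← integral_const_mul, ← integral_sub hFψ (hψi.const_mul m)]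
    simp only [sub_mul]
  rw [e]
  have hdom : Integrable (fun z => (|(Lam f g)^[n] φ z - κ| + |κ - m|) * M) μ :=
    (hκi.abs.add (integrable_const _)).mul_const M
  calc |∫ z, ((Lam f g)^[n] φ z - m) * ψ z ∂μ|
      ≤ ∫ z, (|(Lam f g)^[n] φ z - κ| + |κ - m|) * M ∂μ := by
        rw [← Real.norm_eq_abs]
        refine norm_integral_le_of_norm_le hdom (Eventually.of_forall fun z => ?_)
        rw [Real.norm_eq_abs, abs_mul]
        exact mul_le_mul (abs_sub_le _ _ _) (hM z) (abs_nonneg _) (by positivity)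
    _ = (∫ z, |(Lam f g)^[n] φ z - κ| ∂μ + |κ - m|) * M := by
        rw [integral_mul_const, integral_add hκi.abs (integrable_const _)]; simp
    _ ≤ (t * D + t * D) * M := by gcongr
    _ ≤ (2 * D + 1) * t * M := by nlinarith [mul_nonneg ht0 hM0]
end

section
/- Let μ be an equilibrium measure of F. Then for μ-almost every z ∈ ℂ the normalized preimage distributions of z converge to μ: for μ-almost every z, for every bounded continuous φ : ℂ → ℝ, Λⁿφ(z) → ∫ φ dμ as n → ∞. -/
/-!
Write `d = deg f`, `λ = deg g / deg f < 1`, and test the operator on `log ‖· - a‖`. Up to an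
additive constant, `d · Λ(log ‖· - a‖)(z)` is the logarithm of the resultant of `f - z` and `g - a`,
which is also a sum of the `deg g` terms `log ‖z - b‖`, `b` running over the forward images
`f (g⁻¹ a)`. Iterating, `Λⁿ(log ‖· - a‖)(z)` is a constant plus `d⁻ⁿ` times a sum of only
`(deg g)ⁿ = λⁿ dⁿ` logarithms with poles at the `n`-th forward images of `a`
(`exists_sum_log_iterFib`).

* Since Lebesgue measure on a disc has potentials bounded below, the duality formula and the
  defining convergence show that `μ` has no atoms and that `u(a) = ∫ log ‖w - a‖ dμ(w)` is finite
  and bounded below (`EqData.exists_potential`). Hence `log ‖z - b‖ ≤ u(b) + C` uniformly in `b` and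
  in `z` in a backward invariant disc `K` carrying `μ`.
* `μ` is invariant, `∫ Λⁿψ dμ = ∫ ψ dμ`. Combined with the duality formula this gives
  `Λⁿ(log ‖· - a‖)(z) ≤ u(a) + C λⁿ` on `K`, first off a finite set of poles `a`; averaging over
  circles, where the mean of `log ‖z - a'‖` over `‖a' - a‖ = r` is `φ(z) = log (max r ‖z - a‖)`, it
  becomes `Λⁿφ ≤ ∫ φ dμ + C λⁿ` everywhere on `K` (`EqData.exists_Lam_truncLog_le`).
* The function `∫ φ dμ + C λⁿ - Λⁿφ` is thus nonnegative on `K`, and by invariance its integral is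
  `C λⁿ`. These integrals are summable, so the functions tend to `0` almost everywhere:
  `Λⁿφ → ∫ φ dμ` almost everywhere for each such `φ` (`EqData.ae_tendsto_truncLog`).
* Differences of two such `φ` with the same centre are bump functions, so their span is dense in
  `C(K)` by convolution (`restrict_mem_of_discLog_mem`). As `C(K)` is separable and `Λⁿ` is a
  contraction for the supremum over `K`, one null set serves all continuous functions.
-/

open MeasureTheory Polynomial Filter
open scoped ENNReal

namespace PreimEq

/-! ### Fibres of the correspondence -/

/-- The fibre `g (f⁻¹ z)` of the correspondence over `z`, as a multiset. Exchanging `f` and `g`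
gives the forward image: `fib g f a` is the multiset `f (g⁻¹ a)`. -/
noncomputable def fib (f g : ℂ[X]) (z : ℂ) : Multiset ℂ :=
  (f - C z).roots.map (fun w => g.eval w)

/-- The `n`-th iterated fibre, with multiplicities. -/
noncomputable def iterFib (f g : ℂ[X]) : ℕ → ℂ → Multiset ℂ
  | 0, z => {z}
  | n + 1, z => (fib f g z).bind (iterFib f g n)

variable {f g : ℂ[X]}

lemma natDegree_sub_C' (f : ℂ[X]) (z : ℂ) : (f - C z).natDegree = f.natDegree := natDegree_sub_C

lemma sub_C_ne_zero (hf : 1 ≤ f.natDegree) (z : ℂ) : f - C z ≠ 0 := by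
  intro h
  have := natDegree_sub_C' f z
  rw [h] at this
  simp at this
  omega

lemma card_roots_sub_C (f : ℂ[X]) (z : ℂ) : (f - C z).roots.card = f.natDegree := by
  rw [← natDegree_sub_C' f z]
  exact ((IsAlgClosed.splits _).natDegree_eq_card_roots).symm

lemma mem_roots_sub_C (hf : 1 ≤ f.natDegree) {z w : ℂ} :
    w ∈ (f - C z).roots ↔ f.eval w = z := by
  rw [mem_roots (sub_C_ne_zero hf z)]
  simp [sub_eq_zero]

lemma leadingCoeff_sub_C' (hf : 1 ≤ f.natDegree) (z : ℂ) :
    (f - C z).leadingCoeff = f.leadingCoeff := by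
  rw [leadingCoeff, leadingCoeff, natDegree_sub_C', coeff_sub, coeff_C]
  rw [if_neg (by omega), sub_zero]

lemma eval_sub_eq_prod (hf : 1 ≤ f.natDegree) (z x : ℂ) :
    f.eval x - z = f.leadingCoeff * ((f - C z).roots.map (fun w => x - w)).prod := by
  have h := (IsAlgClosed.splits (f - C z)).eval_eq_prod_roots x
  rw [leadingCoeff_sub_C' hf] at h
  simpa using h

lemma mem_fib (hf : 1 ≤ f.natDegree) {z a : ℂ} :
    a ∈ fib f g z ↔ ∃ w, f.eval w = z ∧ g.eval w = a := by
  simp [fib, mem_roots_sub_C hf]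

lemma mem_fib_comm (hf : 1 ≤ f.natDegree) (hg : 1 ≤ g.natDegree) {z a : ℂ} :
    a ∈ fib f g z ↔ z ∈ fib g f a := by
  rw [mem_fib hf, mem_fib hg]
  exact exists_congr fun _ => and_comm

lemma card_fib (f g : ℂ[X]) (z : ℂ) : (fib f g z).card = f.natDegree := by
  simp [fib, card_roots_sub_C]

lemma card_iterFib (f g : ℂ[X]) (n : ℕ) (z : ℂ) :
    (iterFib f g n z).card = f.natDegree ^ n := by
  induction n generalizing z with
  | zero => simp [iterFib]
  | succ n ih =>
    rw [iterFib, Multiset.card_bind]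
    have : (fib f g z).map (Multiset.card ∘ iterFib f g n)
        = (fib f g z).map (fun _ => f.natDegree ^ n) :=
      Multiset.map_congr rfl fun y _ => ih y
    rw [this]
    simp [card_fib, pow_succ, mul_comm]

lemma iterFib_succ' (f g : ℂ[X]) (n : ℕ) (z : ℂ) :
    iterFib f g (n + 1) z = (iterFib f g n z).bind (fib f g) := by
  induction n generalizing z with
  | zero =>
    have h : (fib f g z).bind (fun x => {id x}) = fib f g z := by
      rw [Multiset.bind_singleton, Multiset.map_id]
    simpa [iterFib] using h
  | succ n ih =>
    rw [iterFib]
    conv_rhs => rw [iterFib]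
    rw [Multiset.bind_assoc]
    exact Multiset.bind_congr fun y _ => ih y

/-- The iterated fibres of `f ∘ g⁻¹` and of `g ∘ f⁻¹` are dual relations. -/
lemma mem_iterFib_comm (hf : 1 ≤ f.natDegree) (hg : 1 ≤ g.natDegree) {n : ℕ} {z a : ℂ} :
    a ∈ iterFib f g n z ↔ z ∈ iterFib g f n a := by
  induction n generalizing z a with
  | zero => simp [iterFib, eq_comm]
  | succ n ih =>
    rw [iterFib_succ', iterFib, Multiset.mem_bind, Multiset.mem_bind]
    refine exists_congr fun y => ?_
    rw [ih, mem_fib_comm hf hg, and_comm]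

lemma Lam_eq_fib (f g : ℂ[X]) (φ : ℂ → ℝ) (z : ℂ) :
    Lam f g φ z = (f.natDegree : ℝ)⁻¹ * ((fib f g z).map φ).sum := by
  simp [Lam, fib, Multiset.map_map]

lemma Lam_iterate_eq (f g : ℂ[X]) (n : ℕ) (φ : ℂ → ℝ) (z : ℂ) :
    ((Lam f g)^[n] φ) z = ((f.natDegree : ℝ) ^ n)⁻¹ * ((iterFib f g n z).map φ).sum := by
  induction n generalizing z with
  | zero => simp [iterFib]
  | succ n ih =>
    rw [Function.iterate_succ_apply', Lam_eq_fib, iterFib, Multiset.map_bind, Multiset.sum_bind]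
    have : (fib f g z).map ((Lam f g)^[n] φ) = (fib f g z).map
        (fun y => ((f.natDegree : ℝ) ^ n)⁻¹ * ((iterFib f g n y).map φ).sum) :=
      Multiset.map_congr rfl fun y _ => ih y
    rw [this, Multiset.sum_map_mul_left, pow_succ, mul_inv]
    ring

lemma Lam_iterate_le_of_le (hf : 1 ≤ f.natDegree) {n : ℕ} {φ : ℂ → ℝ} {z : ℂ} {c : ℝ}
    (h : ∀ y ∈ iterFib f g n z, φ y ≤ c) : ((Lam f g)^[n] φ) z ≤ c := by
  have hd : (0 : ℝ) < (f.natDegree : ℝ) ^ n := by positivity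
  rw [Lam_iterate_eq, inv_mul_le_iff₀ hd]
  have := Multiset.sum_map_le_sum_map φ (fun _ => c) h
  simpa [card_iterFib] using this

lemma Lam_iterate_mono {n : ℕ} {φ ψ : ℂ → ℝ} {z : ℂ}
    (h : ∀ y ∈ iterFib f g n z, φ y ≤ ψ y) :
    ((Lam f g)^[n] φ) z ≤ ((Lam f g)^[n] ψ) z := by
  rw [Lam_iterate_eq, Lam_iterate_eq]
  exact mul_le_mul_of_nonneg_left (Multiset.sum_map_le_sum_map _ _ h) (by positivity)

lemma Lam_iterate_congr {n : ℕ} {φ ψ : ℂ → ℝ} {z : ℂ}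
    (h : ∀ y ∈ iterFib f g n z, φ y = ψ y) :
    ((Lam f g)^[n] φ) z = ((Lam f g)^[n] ψ) z := by
  rw [Lam_iterate_eq, Lam_iterate_eq, Multiset.map_congr rfl h]

lemma Lam_iterate_add (n : ℕ) (φ ψ : ℂ → ℝ) (z : ℂ) :
    ((Lam f g)^[n] (fun y => φ y + ψ y)) z = ((Lam f g)^[n] φ) z + ((Lam f g)^[n] ψ) z := by
  simp only [Lam_iterate_eq, Multiset.sum_map_add, mul_add]

lemma Lam_iterate_const_mul (n : ℕ) (c : ℝ) (φ : ℂ → ℝ) (z : ℂ) :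
    ((Lam f g)^[n] (fun y => c * φ y)) z = c * ((Lam f g)^[n] φ) z := by
  simp only [Lam_iterate_eq, Multiset.sum_map_mul_left]
  ring

lemma Lam_iterate_const (hf : 1 ≤ f.natDegree) (n : ℕ) (c : ℝ) (z : ℂ) :
    ((Lam f g)^[n] (fun _ => c)) z = c := by
  have : (f.natDegree : ℝ) ≠ 0 := by positivity
  simp [Lam_iterate_eq, card_iterFib, this]

/-! ### The operator on logarithms -/

/-- Comparison of both sides with `∏ (w - v)` over the roots `w` of `f - z` and `v` of `g - a`
(the resultant of `f - z` and `g - a`): the logarithm `log ‖· - a‖` is mapped by the operator to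
a sum of logarithms with poles at the forward images of `a`. -/
lemma sum_log_fib (hf : 1 ≤ f.natDegree) (hg : 1 ≤ g.natDegree) {z a : ℂ}
    (h : a ∉ fib f g z) :
    ((fib f g z).map (fun y => Real.log ‖y - a‖)).sum
      = (f.natDegree * Real.log ‖g.leadingCoeff‖ - g.natDegree * Real.log ‖f.leadingCoeff‖)
        + ((fib g f a).map (fun b => Real.log ‖z - b‖)).sum := by
  have key : ∀ {f g : ℂ[X]} (_ : 1 ≤ f.natDegree) (_ : 1 ≤ g.natDegree) {z a : ℂ}
      (_ : a ∉ fib f g z),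
      ((fib f g z).map (fun y => Real.log ‖y - a‖)).sum
      = f.natDegree * Real.log ‖g.leadingCoeff‖
        + ((f - C z).roots.map (fun w => ((g - C a).roots.map
          (fun v => Real.log ‖w - v‖)).sum)).sum := by
    intro f g hf hg z a h
    have h1 : ∀ w ∈ (f - C z).roots, Real.log ‖g.eval w - a‖ = Real.log ‖g.leadingCoeff‖
        + ((g - C a).roots.map (fun v => Real.log ‖w - v‖)).sum := by
      intro w hw
      have hne : g.eval w - a ≠ 0 := by
        intro h0
        exact h ((mem_fib hf).2 ⟨w, (mem_roots_sub_C hf).1 hw, sub_eq_zero.1 h0⟩)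
      rw [eval_sub_eq_prod hg] at hne ⊢
      obtain ⟨hl, hp⟩ := mul_ne_zero_iff.1 hne
      rw [norm_mul, Real.log_mul (norm_ne_zero_iff.2 hl) (norm_ne_zero_iff.2 hp)]
      congr 1
      revert hp
      induction (g - C a).roots using Multiset.induction_on with
      | empty => simp
      | cons v s ih =>
        intro hp
        simp only [Multiset.map_cons, Multiset.prod_cons, Multiset.sum_cons] at hp ⊢
        obtain ⟨h1, h2⟩ := mul_ne_zero_iff.1 hp
        rw [norm_mul, Real.log_mul (norm_ne_zero_iff.2 h1) (norm_ne_zero_iff.2 h2), ih h2]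
    rw [fib, Multiset.map_map, Function.comp_def, Multiset.map_congr rfl (g := fun w => Real.log ‖g.leadingCoeff‖
        + ((g - C a).roots.map (fun v => Real.log ‖w - v‖)).sum) (fun w hw => h1 w hw)]
    rw [Multiset.sum_map_add]
    simp [card_roots_sub_C]
  have e1 := key hf hg h
  have e2 := key hg hf (mt (mem_fib_comm hf hg).2 h)
  have e3 : ((fib g f a).map (fun b => Real.log ‖z - b‖)).sum
      = ((fib g f a).map (fun b => Real.log ‖b - z‖)).sum := by
    simp_rw [norm_sub_rev]
  have e4 : ((g - C a).roots.map (fun w => ((f - C z).roots.map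
          (fun v => Real.log ‖w - v‖)).sum)).sum = ((f - C z).roots.map (fun w =>
          ((g - C a).roots.map (fun v => Real.log ‖w - v‖)).sum)).sum := by
    rw [Multiset.sum_map_sum_map]
    simp_rw [norm_sub_rev]
  rw [e1, e3, e2, e4]
  ring

/-- Iterated version of `sum_log_fib`. The additive constant is `O((deg f)ⁿ)`, because
`deg g < deg f` makes the relevant geometric series converge. -/
lemma exists_sum_log_iterFib (hgf : g.natDegree < f.natDegree) (hg : 1 ≤ g.natDegree) :
    ∃ E : ℝ, ∃ e : ℕ → ℝ, (∀ n, -(E * (f.natDegree : ℝ) ^ n) ≤ e n) ∧ 0 ≤ E ∧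
      ∀ n z a, a ∉ iterFib f g n z →
        ((iterFib f g n z).map (fun y => Real.log ‖y - a‖)).sum
          = e n + ((iterFib g f n a).map (fun b => Real.log ‖z - b‖)).sum := by
  have hf : 1 ≤ f.natDegree := by omega
  set κ : ℝ := f.natDegree * Real.log ‖g.leadingCoeff‖ -
    g.natDegree * Real.log ‖f.leadingCoeff‖ with hκ
  let e : ℕ → ℝ := fun n => Nat.rec 0 (fun n x => (f.natDegree : ℝ) ^ n * κ + g.natDegree * x) n
  have he : ∀ n, e (n + 1) = (f.natDegree : ℝ) ^ n * κ + g.natDegree * e n := fun n => rfl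
  refine ⟨|κ|, e, ?_, abs_nonneg _, ?_⟩
  · intro n
    induction n with
    | zero => simp [e]
    | succ n ih =>
      rw [he, pow_succ]
      have h1 : (g.natDegree : ℝ) + 1 ≤ f.natDegree := by exact_mod_cast hgf
      have h2 : (0 : ℝ) ≤ g.natDegree := by positivity
      have h3 : (0 : ℝ) ≤ (f.natDegree : ℝ) ^ n := by positivity
      have h4 := mul_le_mul_of_nonneg_left ih h2
      have h5 := mul_le_mul_of_nonneg_left (neg_abs_le κ) h3
      have h6 := mul_le_mul_of_nonneg_left h1 (mul_nonneg (abs_nonneg κ) h3)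
      nlinarith
  · intro n
    induction n with
    | zero =>
      intro z a _
      simp [iterFib, e]
    | succ n ih =>
      intro z a ha
      have hmem : ∀ y ∈ iterFib f g n z, a ∉ fib f g y := by
        intro y hy h
        exact ha (by rw [iterFib_succ']; exact Multiset.mem_bind.2 ⟨y, hy, h⟩)
      have hb : ∀ b ∈ fib g f a, b ∉ iterFib f g n z := by
        intro b hb h
        exact hmem b h ((mem_fib_comm hf hg).2 hb)
      calc ((iterFib f g (n + 1) z).map (fun y => Real.log ‖y - a‖)).sum
          = ((iterFib f g n z).map (fun y =>
              ((fib f g y).map (fun y => Real.log ‖y - a‖)).sum)).sum := by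
            rw [iterFib_succ', Multiset.map_bind, Multiset.sum_bind]
        _ = ((iterFib f g n z).map (fun y =>
              κ + ((fib g f a).map (fun b => Real.log ‖y - b‖)).sum)).sum := by
            rw [Multiset.map_congr rfl fun y hy => sum_log_fib hf hg (hmem y hy)]
        _ = (f.natDegree : ℝ) ^ n * κ + ((fib g f a).map (fun b =>
              ((iterFib f g n z).map (fun y => Real.log ‖y - b‖)).sum)).sum := by
            rw [Multiset.sum_map_add, Multiset.sum_map_sum_map]
            simp [card_iterFib]
        _ = (f.natDegree : ℝ) ^ n * κ + ((fib g f a).map (fun b =>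
              e n + ((iterFib g f n b).map (fun b => Real.log ‖z - b‖)).sum)).sum := by
            rw [Multiset.map_congr rfl fun b hb' => ih z b (hb b hb')]
        _ = _ := by
            rw [Multiset.sum_map_add, iterFib, Multiset.map_bind, Multiset.sum_bind, he]
            simp [card_fib]
            ring

/-! ### Continuity and invariant discs -/

/-- Continuity of the roots of `f - z` in `z`, tested against continuous functions: a limit of
root vectors of `f - zₖ` is a root vector of `f - lim zₖ`. -/
lemma continuous_sum_roots (hf : 1 ≤ f.natDegree) {ψ : ℂ → ℝ} (hψ : Continuous ψ) :
    Continuous fun z => ((f - C z).roots.map ψ).sum := by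
  have hvec : ∀ z, ∃ v : Fin f.natDegree → ℂ,
      (f - C z).roots = (Finset.univ : Finset (Fin f.natDegree)).val.map v := by
    intro z
    have key : ∀ (d : ℕ) (m : Multiset ℂ), m.card = d →
        ∃ v : Fin d → ℂ, m = (Finset.univ : Finset (Fin d)).val.map v := by
      intro d m h
      obtain ⟨l, rfl⟩ : ∃ l : List ℂ, (l : Multiset ℂ) = m := ⟨m.toList, m.coe_toList⟩
      rw [Multiset.coe_card] at h
      subst h
      exact ⟨l.get, by rw [Fin.univ_val_map]; simp⟩
    exact key _ _ (card_roots_sub_C f z)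
  choose v hv using hvec
  have hev : ∀ z x, f.eval x - z = f.leadingCoeff * ∏ i, (x - v z i) := by
    intro z x
    rw [eval_sub_eq_prod hf, hv, Multiset.map_map]
    rfl
  have hsum : ∀ z, ((f - C z).roots.map ψ).sum = ∑ i, ψ (v z i) := by
    intro z
    rw [hv, Multiset.map_map]
    rfl
  have hlead : f.leadingCoeff ≠ 0 := by
    rw [Ne, leadingCoeff_eq_zero]
    rintro rfl
    simp at hf
  simp_rw [hsum]
  rw [continuous_iff_continuousAt]
  intro z₀
  refine tendsto_of_subseq_tendsto fun ns hns => ?_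
  -- the roots of `f - ns k` stay bounded, because `f` is proper
  have hbdd : ∃ A : ℝ, ∀ k i, ‖v (ns k) i‖ ≤ A := by
    obtain ⟨M, hM⟩ := (Metric.isBounded_range_of_tendsto ns hns).exists_norm_le
    have hdeg : 0 < f.degree := natDegree_pos_iff_degree_pos.1 hf
    have ht := f.tendsto_norm_atTop hdeg tendsto_norm_cobounded_atTop
    have h1 := ht.eventually_gt_atTop M
    obtain ⟨A, -, hA⟩ := (Filter.hasBasis_cobounded_norm.eventually_iff).1 h1
    refine ⟨A, fun k i => ?_⟩
    by_contra! hlt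
    have h2 := hA (Set.mem_ofPred_eq ▸ hlt.le : v (ns k) i ∈ {x | A ≤ ‖x‖})
    have h3 : f.eval (v (ns k) i) - ns k = 0 := by
      rw [hev, Finset.prod_eq_zero (Finset.mem_univ i) (sub_self _), mul_zero]
    rw [sub_eq_zero.1 h3] at h2
    exact absurd (hM _ ⟨k, rfl⟩) (not_le.2 h2)
  obtain ⟨A, hA⟩ := hbdd
  have hA0 : 0 ≤ A := (norm_nonneg _).trans (hA 0 ⟨0, hf⟩)
  obtain ⟨u, -, ms, hms, hu⟩ := tendsto_subseq_of_bounded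
    (Metric.isBounded_closedBall (x := (0 : Fin f.natDegree → ℂ)) (r := A))
    (x := fun k => v (ns k)) (fun k => by
      rw [mem_closedBall_zero_iff, pi_norm_le_iff_of_nonneg hA0]
      exact hA k)
  refine ⟨ms, ?_⟩
  have hui : ∀ i, Tendsto (fun k => v (ns (ms k)) i) atTop (nhds (u i)) :=
    fun i => (tendsto_pi_nhds.1 hu) i
  have hroots : (f - C z₀).roots = (Finset.univ : Finset (Fin f.natDegree)).val.map u := by
    have hpoly : f - C z₀ = C f.leadingCoeff * ∏ i, (X - C (u i)) := by
      refine Polynomial.funext fun x => ?_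
      have h1 : Tendsto (fun k => f.eval x - ns (ms k)) atTop (nhds (f.eval x - z₀)) :=
        tendsto_const_nhds.sub (hns.comp hms.tendsto_atTop)
      have h2 : Tendsto (fun k => f.eval x - ns (ms k)) atTop
          (nhds (f.leadingCoeff * ∏ i, (x - u i))) := by
        simp_rw [hev]
        exact tendsto_const_nhds.mul
          (tendsto_finsetProd _ fun i _ => tendsto_const_nhds.sub (hui i))
      have := tendsto_nhds_unique h1 h2
      simpa [eval_prod] using this
    rw [hpoly, roots_C_mul _ hlead]
    have := roots_multiset_prod_X_sub_C ((Finset.univ : Finset (Fin f.natDegree)).val.map u)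
    rw [Multiset.map_map] at this
    exact this
  have hval : ∑ i, ψ (v z₀ i) = ∑ i, ψ (u i) := by
    rw [← hsum, hroots, Multiset.map_map]
    rfl
  simp only [hval]
  exact tendsto_finsetSum _ fun i _ => (hψ.tendsto _).comp (hui i)

lemma continuous_Lam (hf : 1 ≤ f.natDegree) {φ : ℂ → ℝ} (hφ : Continuous φ) :
    Continuous (Lam f g φ) :=
  continuous_const.mul (continuous_sum_roots hf (hφ.comp g.continuous))

lemma continuous_Lam_iterate (hf : 1 ≤ f.natDegree) {φ : ℂ → ℝ} (hφ : Continuous φ) (n : ℕ) :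
    Continuous ((Lam f g)^[n] φ) := by
  induction n with
  | zero => exact hφ
  | succ n ih =>
    rw [Function.iterate_succ_apply']
    exact continuous_Lam hf ih

/-- Large discs are backward invariant, because `deg g < deg f`. -/
lemma exists_disc (hgf : g.degree < f.degree) (hf : 1 ≤ f.natDegree) :
    ∃ R₀ : ℝ, 1 ≤ R₀ ∧ ∀ R, R₀ ≤ R → ∀ n z, ‖z‖ ≤ R → ∀ y ∈ iterFib f g n z, ‖y‖ ≤ R := by
  have h1 : ∀ᶠ w in Bornology.cobounded ℂ, ‖g.eval w‖ ≤ 1 * ‖f.eval w‖ :=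
    (isLittleO_cobounded_of_degree_lt hgf).bound one_pos
  obtain ⟨A, -, hA⟩ := (Filter.hasBasis_cobounded_norm.eventually_iff).1 h1
  obtain ⟨M, hM⟩ := (isCompact_closedBall (0 : ℂ) A).exists_bound_of_continuousOn
    g.continuous.continuousOn
  refine ⟨max 1 M, le_max_left _ _, fun R hR n => ?_⟩
  have step : ∀ z, ‖z‖ ≤ R → ∀ y ∈ fib f g z, ‖y‖ ≤ R := by
    intro z hz y hy
    obtain ⟨w, rfl, rfl⟩ := (mem_fib hf).1 hy
    rcases le_total A ‖w‖ with h | h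
    · have := hA (Set.mem_ofPred_eq ▸ h : w ∈ {x | A ≤ ‖x‖})
      rw [one_mul] at this
      exact this.trans hz
    · exact (hM w (by simpa using h)).trans ((le_max_right _ _).trans hR)
  induction n with
  | zero =>
    intro z hz y hy
    simp only [iterFib, Multiset.mem_singleton] at hy
    rwa [hy]
  | succ n ih =>
    intro z hz y hy
    rw [iterFib, Multiset.mem_bind] at hy
    obtain ⟨x, hx, hxy⟩ := hy
    exact ih x (step z hz x hx) y hxy

/-! ### Lebesgue measure on the unit disc -/

/-- Normalised Lebesgue measure on the unit disc, the reference measure against which the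
equilibrium measure is tested. -/
noncomputable def discMeasure : Measure ℂ :=
  (volume (Metric.ball (0 : ℂ) 1))⁻¹ • volume.restrict (Metric.ball (0 : ℂ) 1)

lemma vol_ball_ne_zero : volume (Metric.ball (0 : ℂ) 1) ≠ 0 :=
  (Metric.measure_ball_pos volume _ one_pos).ne'

lemma vol_ball_ne_top : volume (Metric.ball (0 : ℂ) 1) ≠ ⊤ := measure_ball_lt_top.ne

instance : IsProbabilityMeasure discMeasure := ⟨by
  simp only [discMeasure, Measure.smul_apply, Measure.restrict_apply_univ, smul_eq_mul]
  exact ENNReal.inv_mul_cancel vol_ball_ne_zero vol_ball_ne_top⟩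

lemma discMeasure_ac : discMeasure ≪ volume :=
  (Measure.restrict_le_self.absolutelyContinuous).smul_left _

lemma ae_discMeasure_norm_le : ∀ᵐ z ∂discMeasure, ‖z‖ ≤ 1 := by
  refine Measure.ae_smul_measure ?_ _
  filter_upwards [ae_restrict_mem measurableSet_ball] with z hz
  exact (mem_ball_zero_iff.1 hz).le

lemma discMeasure_eq_withDensity : discMeasure = volume.withDensity
    ((Metric.ball (0 : ℂ) 1).indicator fun _ => (volume (Metric.ball (0 : ℂ) 1))⁻¹) := by
  rw [withDensity_indicator measurableSet_ball, withDensity_const, discMeasure]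

lemma integrable_min_log : Integrable (fun z : ℂ => min (Real.log ‖z‖) 0) volume := by
  rw [integrable_fun_norm_addHaar (volume : Measure ℂ) (f := fun y : ℝ => min (Real.log y) 0)]
  rw [Complex.finrank_real_complex, ← Set.Ioc_union_Ioi_eq_Ioi (zero_le_one (α := ℝ)),
    integrableOn_union]
  have hmeas : Measurable fun y : ℝ => y ^ (2 - 1) • min (Real.log y) 0 := by fun_prop
  constructor
  · refine Measure.integrableOn_of_bounded (M := 1) (by simp) hmeas.aestronglyMeasurable ?_
    filter_upwards [ae_restrict_mem measurableSet_Ioc] with y hy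
    have h1 := (Real.abs_log_mul_self_lt y hy.1 hy.2).le
    have h2 : Real.log y ≤ 0 := Real.log_nonpos hy.1.le hy.2
    rw [min_eq_left h2, smul_eq_mul, Real.norm_eq_abs, mul_comm]
    simpa using h1
  · refine IntegrableOn.congr_fun (f := fun _ => (0 : ℝ)) integrableOn_zero ?_ measurableSet_Ioi
    intro y hy
    have h2 : 0 ≤ Real.log y := Real.log_nonneg (le_of_lt hy)
    simp [min_eq_right h2]

/-- Logarithmic potentials of the disc measure are bounded below. -/
lemma exists_disc_potential_bound : ∃ C₀ : ℝ, 0 ≤ C₀ ∧ ∀ b : ℂ,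
    Integrable (fun z : ℂ => min (Real.log ‖z - b‖) 0) discMeasure ∧
      -C₀ ≤ ∫ z, min (Real.log ‖z - b‖) 0 ∂discMeasure := by
  have hint : ∀ b : ℂ, Integrable (fun z : ℂ => min (Real.log ‖z - b‖) 0) volume :=
    fun b => integrable_min_log.comp_sub_right b
  refine ⟨(volume (Metric.ball (0 : ℂ) 1))⁻¹.toReal * ∫ z : ℂ, -min (Real.log ‖z‖) 0, ?_, ?_⟩
  · refine mul_nonneg ENNReal.toReal_nonneg (integral_nonneg fun z => ?_)
    simp
  intro b
  refine ⟨(hint b).restrict.smul_measure (ENNReal.inv_ne_top.2 vol_ball_ne_zero), ?_⟩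
  rw [discMeasure, integral_smul_measure, smul_eq_mul, ← mul_neg]
  refine mul_le_mul_of_nonneg_left ?_ ENNReal.toReal_nonneg
  have h1 : ∫ z in Metric.ball (0 : ℂ) 1, -min (Real.log ‖z - b‖) 0
      ≤ ∫ z, -min (Real.log ‖z - b‖) 0 :=
    setIntegral_le_integral (hint b).neg (Eventually.of_forall fun z => by simp)
  have h2 : ∫ z : ℂ, -min (Real.log ‖z - b‖) 0 = ∫ z : ℂ, -min (Real.log ‖z‖) 0 :=
    integral_sub_right_eq_self (fun z : ℂ => -min (Real.log ‖z‖) 0) b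
  rw [h2, integral_neg] at h1
  linarith

/-! ### Consequences of the equilibrium property -/

/-- The standing data: `deg f > deg g ≥ 1`, a probability measure `μ` carried by a backward
invariant disc of radius `R`, and convergence of `∫ Λⁿψ` against the disc measure for *every*
continuous `ψ`, bounded or not. -/
structure EqData (f g : ℂ[X]) (μ : Measure ℂ) (R : ℝ) : Prop where
  lt : g.natDegree < f.natDegree
  one_le : 1 ≤ g.natDegree
  prob : IsProbabilityMeasure μ
  one_le_R : 1 ≤ R
  supp : ∀ᵐ z ∂μ, ‖z‖ ≤ R
  disc : ∀ n z, ‖z‖ ≤ R → ∀ y ∈ iterFib f g n z, ‖y‖ ≤ R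
  lim : ∀ ψ : ℂ → ℝ, Continuous ψ →
    Tendsto (fun n => ∫ z, ((Lam f g)^[n] ψ) z ∂discMeasure) atTop (nhds (∫ z, ψ z ∂μ))

lemma exists_eqData {μ : Measure ℂ} (hdeg : g.degree < f.degree) (hg : 1 ≤ g.degree)
    (hμ : IsEquilibrium f g μ) : ∃ R, EqData f g μ R := by
  have hg0 : g ≠ 0 := by
    rintro rfl
    simp at hg
  have hg' : 1 ≤ g.natDegree := by
    rw [degree_eq_natDegree hg0] at hg
    exact_mod_cast hg
  have hlt : g.natDegree < f.natDegree := natDegree_lt_natDegree hg0 hdeg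
  have hf : 1 ≤ f.natDegree := by omega
  obtain ⟨hprob, ⟨K, hK, hKμ⟩, hlim⟩ := hμ
  obtain ⟨R₀, hR₀, hdisc⟩ := exists_disc (g := g) hdeg hf
  obtain ⟨r, hr⟩ := hK.isBounded.exists_norm_le
  set R := max R₀ r with hR
  have hsupp : ∀ᵐ z ∂μ, ‖z‖ ≤ R := by
    have : ∀ᵐ z ∂μ, z ∈ K := hKμ
    filter_upwards [this] with z hz
    exact (hr z hz).trans (le_max_right _ _)
  have hR1 : 1 ≤ R := hR₀.trans (le_max_left _ _)
  refine ⟨R, hlt, hg', hprob, hR1, hsupp, hdisc R (le_max_left _ _), ?_⟩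
  intro ψ hψ
  obtain ⟨M, hM⟩ := (isCompact_closedBall (0 : ℂ) R).exists_bound_of_continuousOn
    hψ.continuousOn
  have hM0 : 0 ≤ M := (norm_nonneg _).trans (hM 0 (by simp; linarith))
  -- truncate `ψ` outside the invariant disc
  set ψ' : ℂ → ℝ := fun z => max (min (ψ z) M) (-M) with hψ'
  have heq : ∀ z, ‖z‖ ≤ R → ψ' z = ψ z := by
    intro z hz
    have h := abs_le.1 (hM z (by simpa using hz))
    simp only [hψ']
    rw [min_eq_left h.2, max_eq_left h.1]
  have hbd : ∀ z, |ψ' z| ≤ M := by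
    intro z
    rw [abs_le]
    exact ⟨le_max_right _ _, max_le (min_le_right _ _) (by linarith)⟩
  have hcont : Continuous ψ' := by fun_prop
  have h1 := hlim discMeasure inferInstance
    ⟨Metric.closedBall 0 1, isCompact_closedBall _ _, by
      have h : ∀ᵐ z ∂discMeasure, z ∈ Metric.closedBall (0 : ℂ) 1 := by
        filter_upwards [ae_discMeasure_norm_le] with z hz
        simpa using hz
      exact h⟩
    ⟨_, ⟨(volume (Metric.ball (0 : ℂ) 1))⁻¹, (ENNReal.inv_ne_top.2 vol_ball_ne_zero).lt_top,
      fun z => Set.indicator_le_self _ _ z⟩, discMeasure_eq_withDensity⟩ ψ' hcont ⟨M, hbd⟩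
  have h2 : ∫ z, ψ' z ∂μ = ∫ z, ψ z ∂μ := integral_congr_ae (by
    filter_upwards [hsupp] with z hz using heq z hz)
  rw [h2] at h1
  refine h1.congr fun n => integral_congr_ae ?_
  filter_upwards [ae_discMeasure_norm_le] with z hz
  exact Lam_iterate_congr fun y hy => heq y (hdisc R (le_max_left _ _) n z (hz.trans hR1) y hy)

namespace EqData

variable {μ : Measure ℂ} {R : ℝ}

lemma one_le_f (h : EqData f g μ R) : 1 ≤ f.natDegree := by
  have := h.lt
  have := h.one_le
  omega

lemma integrable_of_continuous (h : EqData f g μ R) {ψ : ℂ → ℝ} (hψ : Continuous ψ) :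
    Integrable ψ μ := by
  have := h.prob
  obtain ⟨M, hM⟩ := (isCompact_closedBall (0 : ℂ) R).exists_bound_of_continuousOn
    hψ.continuousOn
  refine Integrable.of_bound hψ.aestronglyMeasurable M ?_
  filter_upwards [h.supp] with z hz
  exact hM z (by simpa using hz)

lemma integrable_disc_of_continuous {ψ : ℂ → ℝ} (hψ : Continuous ψ) :
    Integrable ψ discMeasure := by
  obtain ⟨M, hM⟩ := (isCompact_closedBall (0 : ℂ) 1).exists_bound_of_continuousOn
    hψ.continuousOn
  refine Integrable.of_bound hψ.aestronglyMeasurable M ?_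
  filter_upwards [ae_discMeasure_norm_le] with z hz
  exact hM z (by simpa using hz)

/-- The equilibrium measure is invariant. -/
lemma integral_Lam_iterate (h : EqData f g μ R) {ψ : ℂ → ℝ} (hψ : Continuous ψ) (n : ℕ) :
    ∫ z, ((Lam f g)^[n] ψ) z ∂μ = ∫ z, ψ z ∂μ := by
  have h1 := h.lim _ (continuous_Lam_iterate (g := g) h.one_le_f hψ n)
  have h2 := (h.lim ψ hψ).comp (tendsto_add_atTop_nat n)
  refine tendsto_nhds_unique h1 (h2.congr fun k => ?_)
  simp only [Function.comp, Function.iterate_add_apply]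

/-- A lower bound for the integral of a majorant of `log ‖· - a‖`, uniform in the pole `a`: the
iterates of `log ‖· - a‖` are averages of logarithms, weighted by `(deg g / deg f)ⁿ ≤ 1`, up to
bounded constants, and the disc measure has potentials bounded below. -/
lemma exists_lower_bound (h : EqData f g μ R) : ∃ C₁ : ℝ, 0 ≤ C₁ ∧
    ∀ (a : ℂ) (ψ : ℂ → ℝ), Continuous ψ → (∀ z, z ≠ a → Real.log ‖z - a‖ ≤ ψ z) →
      -C₁ ≤ ∫ z, ψ z ∂μ := by
  obtain ⟨E, e, he, hE, hsum⟩ := exists_sum_log_iterFib h.lt h.one_le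
  obtain ⟨C₀, hC₀, hpot⟩ := exists_disc_potential_bound
  refine ⟨E + C₀, add_nonneg hE hC₀, fun a ψ hψ hle => ?_⟩
  refine ge_of_tendsto' (h.lim ψ hψ) fun n => ?_
  have hd : (0 : ℝ) < (f.natDegree : ℝ) ^ n := by
    have := h.one_le_f
    positivity
  set B := iterFib g f n a with hB
  have hnull : ∀ᵐ z ∂discMeasure, z ∉ B := by
    have : volume {z | z ∈ B} = 0 := by
      have hfin : {z | z ∈ B}.Finite := by
        classical
        exact (B.toFinset.finite_toSet).subset fun z hz => by simpa using hz
      exact hfin.measure_zero _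
    have h0 := discMeasure_ac this
    rw [ae_iff]
    simpa using h0
  have hlow : ∀ᵐ z ∂discMeasure, -E + ((f.natDegree : ℝ) ^ n)⁻¹ *
      (B.map fun b => min (Real.log ‖z - b‖) 0).sum ≤ ((Lam f g)^[n] ψ) z := by
    filter_upwards [hnull] with z hz
    have hz' : a ∉ iterFib f g n z := mt (mem_iterFib_comm h.one_le_f h.one_le).1 hz
    rw [Lam_iterate_eq]
    have h1 : ((iterFib f g n z).map fun y => Real.log ‖y - a‖).sum
        ≤ ((iterFib f g n z).map ψ).sum :=
      Multiset.sum_map_le_sum_map _ _ fun y hy => hle y fun hya => hz' (hya ▸ hy)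
    have h2 : (B.map fun b => min (Real.log ‖z - b‖) 0).sum
        ≤ (B.map fun b => Real.log ‖z - b‖).sum :=
      Multiset.sum_map_le_sum_map _ _ fun y _ => min_le_left _ _
    rw [hsum n z a hz'] at h1
    rw [le_inv_mul_iff₀ hd, mul_add, mul_inv_cancel_left₀ hd.ne']
    have := he n
    linarith
  have hB_int : ∀ s : Multiset ℂ, Integrable (fun z : ℂ =>
      (s.map fun b => min (Real.log ‖z - b‖) 0).sum) discMeasure ∧
      -(C₀ * s.card) ≤ ∫ z, (s.map fun b => min (Real.log ‖z - b‖) 0).sum ∂discMeasure := by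
    intro s
    induction s using Multiset.induction_on with
    | empty => simp
    | cons b s ih =>
      simp only [Multiset.map_cons, Multiset.sum_cons, Multiset.card_cons]
      refine ⟨(hpot b).1.add ih.1, ?_⟩
      rw [integral_add (hpot b).1 ih.1]
      push_cast
      linarith [ih.2, (hpot b).2]
  have hmono := integral_mono_ae ((integrable_const (-E)).add ((hB_int B).1.const_mul _))
    (integrable_disc_of_continuous (continuous_Lam_iterate (g := g) h.one_le_f hψ n)) hlow
  refine le_trans ?_ hmono
  simp only [Pi.add_apply]
  rw [integral_add (integrable_const _) ((hB_int B).1.const_mul _), integral_const_mul]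
  have hcard : (B.card : ℝ) ≤ (f.natDegree : ℝ) ^ n := by
    rw [hB, card_iterFib]
    push_cast
    have : (g.natDegree : ℝ) ≤ f.natDegree := by exact_mod_cast h.lt.le
    gcongr
  have h3 : -C₀ ≤ ((f.natDegree : ℝ) ^ n)⁻¹ *
      ∫ z, (B.map fun b => min (Real.log ‖z - b‖) 0).sum ∂discMeasure := by
    rw [le_inv_mul_iff₀ hd]
    have := mul_le_mul_of_nonneg_left hcard hC₀
    linarith [(hB_int B).2]
  simp
  linarith

end EqData

/-! ### Truncated logarithms and the logarithmic potential of the equilibrium measure -/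

/-- The logarithm `log ‖z - a‖` truncated below at `log r`; for `r > 0` it is continuous. -/
noncomputable def truncLog (a : ℂ) (r : ℝ) (z : ℂ) : ℝ := Real.log (max r ‖z - a‖)

lemma continuous_truncLog (a : ℂ) {r : ℝ} (hr : 0 < r) : Continuous (truncLog a r) := by
  unfold truncLog
  refine Continuous.log (by fun_prop) fun z => ?_
  exact (lt_of_lt_of_le hr (le_max_left _ _)).ne'

lemma truncLog_of_le {a z : ℂ} {r : ℝ} (h : r ≤ ‖z - a‖) : truncLog a r z = Real.log ‖z - a‖ := by
  rw [truncLog, max_eq_right h]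

lemma truncLog_of_ge {a z : ℂ} {r : ℝ} (h : ‖z - a‖ ≤ r) : truncLog a r z = Real.log r := by
  rw [truncLog, max_eq_left h]

lemma log_le_truncLog {a z : ℂ} (r : ℝ) (h : z ≠ a) : Real.log ‖z - a‖ ≤ truncLog a r z :=
  Real.log_le_log (norm_pos_iff.2 (sub_ne_zero.2 h)) (le_max_right _ _)

lemma truncLog_mono {a z : ℂ} {r s : ℝ} (hr : 0 < r) (h : r ≤ s) :
    truncLog a r z ≤ truncLog a s z :=
  Real.log_le_log (lt_of_lt_of_le hr (le_max_left _ _)) (max_le_max_right _ h)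

namespace EqData

variable {μ : Measure ℂ} {R : ℝ}

/-- The lower bound on truncated potentials passes to the limit: the equilibrium measure has no
atoms and its logarithmic potential is finite and bounded below everywhere. The first conjunct makes
the junk value `Real.log 0 = 0` at `z = a` harmless. -/
lemma exists_potential (h : EqData f g μ R) : ∃ C₁ : ℝ, 0 ≤ C₁ ∧ ∀ a : ℂ,
    (∀ᵐ z ∂μ, z ≠ a) ∧ Integrable (fun z => Real.log ‖z - a‖) μ ∧
    -C₁ ≤ ∫ z, Real.log ‖z - a‖ ∂μ ∧
    Tendsto (fun k : ℕ => ∫ z, truncLog a (1 / ((k : ℝ) + 1)) z ∂μ) atTop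
      (nhds (∫ z, Real.log ‖z - a‖ ∂μ)) := by
  have := h.prob
  obtain ⟨C₁, hC₁, hlow⟩ := h.exists_lower_bound
  refine ⟨C₁, hC₁, fun a => ?_⟩
  set φ : ℕ → ℂ → ℝ := fun k => truncLog a (1 / ((k : ℝ) + 1)) with hφ
  have hk0 : ∀ k : ℕ, (0 : ℝ) < 1 / ((k : ℝ) + 1) := fun k => by positivity
  have hφc : ∀ k, Continuous (φ k) := fun k => continuous_truncLog a (hk0 k)
  have hφi : ∀ k, Integrable (φ k) μ := fun k => h.integrable_of_continuous (hφc k)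
  have hφl : ∀ k, -C₁ ≤ ∫ z, φ k z ∂μ := fun k =>
    hlow a _ (hφc k) fun z hz => log_le_truncLog _ hz
  have hanti : ∀ z, Antitone fun k => φ k z := fun z i j hij =>
    truncLog_mono (hk0 j) (one_div_le_one_div_of_le (by positivity)
      (by have : (i : ℝ) ≤ j := by exact_mod_cast hij
          linarith))
  have hev : ∀ z, z ≠ a → ∀ᶠ k in atTop, φ k z = Real.log ‖z - a‖ := by
    intro z hz
    have h0 : 0 < ‖z - a‖ := norm_pos_iff.2 (sub_ne_zero.2 hz)
    filter_upwards [(tendsto_one_div_add_atTop_nhds_zero_nat (𝕜 := ℝ)).eventually_lt_const h0]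
      with k hk
    exact truncLog_of_le hk.le
  set M : ℝ := Real.log (1 + R + ‖a‖) with hM
  have hR := h.one_le_R
  have hMb : ∀ k, ∀ᵐ z ∂μ, φ k z ≤ M := by
    intro k
    filter_upwards [h.supp] with z hz
    refine Real.log_le_log (lt_of_lt_of_le (hk0 k) (le_max_left _ _)) (max_le ?_ ?_)
    · have : 1 / ((k : ℝ) + 1) ≤ 1 := by
        rw [div_le_one (by positivity)]
        linarith [(Nat.cast_nonneg k : (0 : ℝ) ≤ k)]
      linarith [norm_nonneg a]
    · linarith [norm_sub_le z a]
  set F : ℂ → ℝ≥0∞ := fun z => ⨆ k, ENNReal.ofReal (M - φ k z) with hF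
  have hFint : ∫⁻ z, F z ∂μ ≤ ENNReal.ofReal (M + C₁) := by
    rw [hF, lintegral_iSup]
    · refine iSup_le fun k => ?_
      have hi : Integrable (fun z => M - φ k z) μ := (integrable_const M).sub (hφi k)
      rw [← ofReal_integral_eq_lintegral_ofReal hi
        (by filter_upwards [hMb k] with z hz using sub_nonneg.2 hz)]
      refine ENNReal.ofReal_le_ofReal ?_
      rw [integral_sub (integrable_const _) (hφi k)]
      have := hφl k
      simp
      linarith
    · exact fun k => (ENNReal.continuous_ofReal.comp (continuous_const.sub (hφc k))).measurable
    · exact fun i j hij z => ENNReal.ofReal_le_ofReal (sub_le_sub_left (hanti z hij) _)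
  have hFm : Measurable F := Measurable.iSup fun k =>
    (ENNReal.continuous_ofReal.comp (continuous_const.sub (hφc k))).measurable
  -- `F` has finite integral but is infinite at `a`, so `a` is not an atom
  have hFa : F a = ⊤ := by
    rw [hF, iSup_eq_top]
    intro b hb
    obtain ⟨k, hk⟩ := ((tendsto_natCast_atTop_atTop (R := ℝ)).atTop_add
      (tendsto_const_nhds (x := (1 : ℝ)))).eventually_gt_atTop (Real.exp (b.toReal - M)) |>.exists
    refine ⟨k, ?_⟩
    have h1 : φ k a = -Real.log ((k : ℝ) + 1) := by
      rw [hφ]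
      simp only
      rw [truncLog_of_ge (by simpa using (hk0 k).le), one_div, Real.log_inv]
    rw [ENNReal.lt_ofReal_iff_toReal_lt hb.ne, h1]
    have := (Real.lt_log_iff_exp_lt (by positivity)).2 hk
    linarith
  have hFfin : ∀ᵐ z ∂μ, F z < ⊤ :=
    ae_lt_top hFm (hFint.trans_lt ENNReal.ofReal_lt_top).ne
  have hne : ∀ᵐ z ∂μ, z ≠ a := by
    filter_upwards [hFfin] with z hz
    rintro rfl
    exact hz.ne hFa
  have hmeas : Measurable fun z : ℂ => Real.log ‖z - a‖ := by fun_prop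
  have hint : Integrable (fun z => Real.log ‖z - a‖) μ := by
    have h1 : Integrable (fun z => M - Real.log ‖z - a‖) μ := by
      refine ⟨(measurable_const.sub hmeas).aestronglyMeasurable, ?_⟩
      rw [hasFiniteIntegral_iff_ofReal]
      · refine lt_of_le_of_lt (lintegral_mono_ae ?_) (hFint.trans_lt ENNReal.ofReal_lt_top)
        filter_upwards [hne] with z hz
        obtain ⟨k, hk⟩ := (hev z hz).exists
        rw [← hk]
        exact le_iSup (fun k => ENNReal.ofReal (M - φ k z)) k
      · filter_upwards [hMb 0, hne] with z hz hza
        have := log_le_truncLog (a := a) (1 / (((0 : ℕ) : ℝ) + 1)) hza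
        exact sub_nonneg.2 (this.trans hz)
    refine ((integrable_const M).sub h1).congr (ae_of_all _ fun z => ?_)
    simp
  have hlim : Tendsto (fun k : ℕ => ∫ z, φ k z ∂μ) atTop (nhds (∫ z, Real.log ‖z - a‖ ∂μ)) := by
    refine integral_tendsto_of_tendsto_of_antitone hφi hint (ae_of_all _ hanti) ?_
    filter_upwards [hne] with z hz
    exact tendsto_const_nhds.congr' ((hev z hz).mono fun k hk => hk.symm)
  exact ⟨hne, hint, ge_of_tendsto' hlim hφl, hlim⟩

lemma ne_ae (h : EqData f g μ R) (a : ℂ) : ∀ᵐ z ∂μ, z ≠ a := by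
  obtain ⟨_, _, H⟩ := h.exists_potential
  exact (H a).1

lemma integrable_log (h : EqData f g μ R) (a : ℂ) : Integrable (fun z => Real.log ‖z - a‖) μ := by
  obtain ⟨_, _, H⟩ := h.exists_potential
  exact (H a).2.1

lemma tendsto_truncLog (h : EqData f g μ R) (a : ℂ) :
    Tendsto (fun k : ℕ => ∫ z, truncLog a (1 / ((k : ℝ) + 1)) z ∂μ) atTop
      (nhds (∫ z, Real.log ‖z - a‖ ∂μ)) := by
  obtain ⟨_, _, H⟩ := h.exists_potential
  exact (H a).2.2.2

lemma integral_sum_log (h : EqData f g μ R) (s : Multiset ℂ) :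
    Integrable (fun z => (s.map fun b => Real.log ‖z - b‖).sum) μ ∧
    ∫ z, (s.map fun b => Real.log ‖z - b‖).sum ∂μ
      = (s.map fun b => ∫ z, Real.log ‖z - b‖ ∂μ).sum := by
  induction s using Multiset.induction_on with
  | empty => simp
  | cons b s ih =>
    simp only [Multiset.map_cons, Multiset.sum_cons]
    refine ⟨(h.integrable_log b).add ih.1, ?_⟩
    rw [integral_add (h.integrable_log b) ih.1, ih.2]

lemma notMem_ae (h : EqData f g μ R) (s : Multiset ℂ) : ∀ᵐ z ∂μ, z ∉ s := by
  induction s using Multiset.induction_on with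
  | empty => simp
  | cons b s ih =>
    filter_upwards [h.ne_ae b, ih] with z h1 h2
    simp [h1, h2]

/-- For points of the invariant disc, `log ‖z - b‖` exceeds the potential of `μ` at `b` by at most
a constant, uniformly in `b`. -/
lemma exists_log_le (h : EqData f g μ R) : ∃ C₂ : ℝ, 0 ≤ C₂ ∧ ∀ b z : ℂ, ‖z‖ ≤ R → z ≠ b →
    Real.log ‖z - b‖ ≤ (∫ w, Real.log ‖w - b‖ ∂μ) + C₂ := by
  have := h.prob
  obtain ⟨C₁, hC₁, H⟩ := h.exists_potential
  have hR := h.one_le_R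
  have hlog3 : 0 ≤ Real.log (3 * R) := Real.log_nonneg (by linarith)
  refine ⟨Real.log (3 * R) + C₁, by positivity, fun b z hz hzb => ?_⟩
  have h0 : 0 < ‖z - b‖ := norm_pos_iff.2 (sub_ne_zero.2 hzb)
  have h1 : Real.log ‖z - b‖ ≤ Real.log (R + ‖b‖) :=
    Real.log_le_log h0 (by linarith [norm_sub_le z b])
  -- near poles: the potential is bounded below; far poles: `log ‖· - b‖` is nearly constant on the
  -- disc, as `R + ‖b‖ ≤ 3 (‖b‖ - R)` for `‖b‖ ≥ 2 R`
  rcases le_total ‖b‖ (2 * R) with hb | hb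
  · have h2 : Real.log (R + ‖b‖) ≤ Real.log (3 * R) :=
      Real.log_le_log (by positivity) (by linarith)
    linarith [(H b).2.2.1]
  · have h2 : Real.log (‖b‖ - R) ≤ ∫ w, Real.log ‖w - b‖ ∂μ := by
      have : ∫ _w, Real.log (‖b‖ - R) ∂μ ≤ ∫ w, Real.log ‖w - b‖ ∂μ := by
        refine integral_mono_ae (integrable_const _) (H b).2.1 ?_
        filter_upwards [h.supp] with w hw
        refine Real.log_le_log (by linarith) ?_
        rw [norm_sub_rev]
        linarith [norm_sub_norm_le b w]
      simpa using this
    have h3 : Real.log (R + ‖b‖) ≤ Real.log (3 * R) + Real.log (‖b‖ - R) := by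
      rw [← Real.log_mul (by positivity) (by linarith)]
      refine Real.log_le_log (by positivity) ?_
      nlinarith
    linarith

/-- The potential of `μ` at `a` dominates the normalised sum of its potentials over the dual
fibre: invariance of `μ` applied to the duality formula. -/
lemma potential_ge (h : EqData f g μ R) {n : ℕ} {a : ℂ} {e : ℝ}
    (he : ∀ z, a ∉ iterFib f g n z →
        ((iterFib f g n z).map (fun y => Real.log ‖y - a‖)).sum
          = e + ((iterFib g f n a).map (fun b => Real.log ‖z - b‖)).sum) :
    ((f.natDegree : ℝ) ^ n)⁻¹ *
      (e + ((iterFib g f n a).map fun b => ∫ z, Real.log ‖z - b‖ ∂μ).sum)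
      ≤ ∫ z, Real.log ‖z - a‖ ∂μ := by
  have := h.prob
  refine ge_of_tendsto' (h.tendsto_truncLog a) fun k => ?_
  have hc := continuous_truncLog a (r := 1 / ((k : ℝ) + 1)) (by positivity)
  rw [← h.integral_Lam_iterate hc n]
  obtain ⟨hi, hs⟩ := h.integral_sum_log (iterFib g f n a)
  rw [← hs]
  have : ∫ z, (((f.natDegree : ℝ) ^ n)⁻¹ *
      (e + ((iterFib g f n a).map fun b => Real.log ‖z - b‖).sum)) ∂μ
      = ((f.natDegree : ℝ) ^ n)⁻¹ *
      (e + ∫ z, ((iterFib g f n a).map fun b => Real.log ‖z - b‖).sum ∂μ) := by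
    rw [integral_const_mul, integral_add (integrable_const _) hi]
    simp
  rw [← this]
  refine integral_mono_ae (((integrable_const e).add hi).const_mul _)
    (h.integrable_of_continuous (continuous_Lam_iterate h.one_le_f hc n)) ?_
  filter_upwards [h.notMem_ae (iterFib g f n a)] with z hz
  have hz' : a ∉ iterFib f g n z := mt (mem_iterFib_comm h.one_le_f h.one_le).1 hz
  rw [← he z hz', Lam_iterate_eq]
  refine mul_le_mul_of_nonneg_left (Multiset.sum_map_le_sum_map _ _ fun y hy => ?_) (by positivity)
  exact log_le_truncLog _ fun hya => hz' (hya ▸ hy)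

/-- The contraction estimate: off the fibres through `a`, averages of `log ‖· - a‖` over the
`n`-th fibre of a point of the disc exceed the potential at `a` by at most `C (deg g / deg f)ⁿ`. -/
lemma exists_Lam_log_le (h : EqData f g μ R) : ∃ C : ℝ, 0 ≤ C ∧ ∀ n (a z : ℂ), ‖z‖ ≤ R →
    a ∉ iterFib f g n z → ((Lam f g)^[n] fun y => Real.log ‖y - a‖) z
      ≤ (∫ w, Real.log ‖w - a‖ ∂μ) + C * ((g.natDegree : ℝ) / f.natDegree) ^ n := by
  obtain ⟨C, hC, H⟩ := h.exists_log_le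
  obtain ⟨E, e, -, -, he⟩ := exists_sum_log_iterFib h.lt h.one_le
  refine ⟨C, hC, fun n a z hz ha => ?_⟩
  have hd : (0 : ℝ) < (f.natDegree : ℝ) ^ n := by
    have := h.one_le_f
    positivity
  have hpot := h.potential_ge (n := n) (a := a) fun z => he n z a
  rw [Lam_iterate_eq, he n z a ha]
  have hz' : z ∉ iterFib g f n a := mt (mem_iterFib_comm h.one_le_f h.one_le).2 ha
  have h1 : ((iterFib g f n a).map fun b => Real.log ‖z - b‖).sum
      ≤ ((iterFib g f n a).map fun b => (∫ w, Real.log ‖w - b‖ ∂μ) + C).sum :=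
    Multiset.sum_map_le_sum_map _ _ fun b hb => H b z hz fun hzb => hz' (hzb ▸ hb)
  rw [Multiset.sum_map_add] at h1
  simp only [Multiset.map_const', Multiset.sum_replicate, card_iterFib, nsmul_eq_mul] at h1
  push_cast at h1
  have h2 := mul_le_mul_of_nonneg_left h1 (inv_nonneg.2 hd.le)
  rw [div_pow, div_eq_inv_mul]
  rw [mul_add] at hpot h2 ⊢
  linarith

end EqData

/-! ### Averaging over circles -/

/-- The normalised Lebesgue measure on the interval `(0, 2π]`. -/
noncomputable def angMeasure : Measure ℝ :=
  (ENNReal.ofReal (2 * Real.pi))⁻¹ • volume.restrict (Set.Ioc 0 (2 * Real.pi))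

instance : IsProbabilityMeasure angMeasure := by
  constructor
  have h : (0 : ℝ) < 2 * Real.pi := by positivity
  simp only [angMeasure, Measure.smul_apply, Measure.restrict_apply_univ, Real.volume_Ioc, sub_zero,
    smul_eq_mul]
  exact ENNReal.inv_mul_cancel (by simpa using h) ENNReal.ofReal_ne_top

lemma integrable_angMeasure {F : ℝ → ℝ} (h : IntervalIntegrable F volume 0 (2 * Real.pi)) :
    Integrable F angMeasure := by
  have h0 : (0 : ℝ) < 2 * Real.pi := by positivity
  rw [intervalIntegrable_iff_integrableOn_Ioc_of_le h0.le] at h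
  exact Integrable.smul_measure h (by simpa using h0)

lemma integral_angMeasure (F : ℝ → ℝ) :
    ∫ θ, F θ ∂angMeasure = (2 * Real.pi)⁻¹ * ∫ θ in (0 : ℝ)..(2 * Real.pi), F θ := by
  have h0 : (0 : ℝ) < 2 * Real.pi := by positivity
  rw [angMeasure, integral_smul_measure, intervalIntegral.integral_of_le h0.le,
    ENNReal.toReal_inv, ENNReal.toReal_ofReal h0.le, smul_eq_mul]

lemma integrable_log_circleMap (a z : ℂ) (r : ℝ) :
    Integrable (fun θ => Real.log ‖z - circleMap a r θ‖) angMeasure := by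
  have h := circleIntegrable_log_norm_sub_const (a := z) (c := a) r
  simp only [norm_sub_rev z]
  exact integrable_angMeasure h

/-- Truncated logarithms are averages of logarithmic kernels over circles (Jensen's formula). -/
lemma integral_log_circleMap (a z : ℂ) {r : ℝ} (hr : 0 < r) :
    ∫ θ, Real.log ‖z - circleMap a r θ‖ ∂angMeasure = truncLog a r z := by
  have h := circleAverage_log_norm_sub_const_eq_log_radius_add_posLog (a := z) (c := a) hr.ne'
  rw [Real.circleAverage_def, smul_eq_mul] at h
  simp only [norm_sub_rev z]
  rw [integral_angMeasure, h, truncLog, norm_sub_rev a z]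
  rcases le_total r ‖z - a‖ with hz | hz
  · have : 1 ≤ |r⁻¹ * ‖z - a‖| := by
      rw [abs_of_nonneg (by positivity), le_inv_mul_iff₀ hr]
      simpa using hz
    rw [max_eq_right hz, Real.posLog_eq_log this, Real.log_mul (by positivity) (by linarith),
      Real.log_inv]
    ring
  · have : |r⁻¹ * ‖z - a‖| ≤ 1 := by
      rw [abs_of_nonneg (by positivity), inv_mul_le_iff₀ hr]
      simpa using hz
    rw [max_eq_left hz, (Real.posLog_eq_zero_iff _).2 this, add_zero]

lemma circleMap_notMem_ae (a : ℂ) {r : ℝ} (hr : 0 < r) (s : Multiset ℂ) :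
    ∀ᵐ θ ∂angMeasure, circleMap a r θ ∉ s := by
  classical
  have h1 : (circleMap a r ⁻¹' (s.toFinset : Set ℂ)).Countable :=
    Set.Countable.preimage_circleMap s.toFinset.finite_toSet.countable a hr.ne'
  have h2 : ∀ᵐ θ ∂(volume : Measure ℝ), θ ∉ circleMap a r ⁻¹' (s.toFinset : Set ℂ) :=
    measure_eq_zero_iff_ae_notMem.1 (h1.measure_zero _)
  have h3 : ∀ᵐ θ ∂angMeasure, θ ∉ circleMap a r ⁻¹' (s.toFinset : Set ℂ) :=
    Measure.ae_smul_measure (ae_restrict_of_ae h2) _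
  filter_upwards [h3] with θ hθ
  simpa using hθ

lemma integral_multiset_sum {F : ℂ → ℝ → ℝ} (s : Multiset ℂ)
    (hF : ∀ y, Integrable (F y) angMeasure) :
    Integrable (fun θ => (s.map fun y => F y θ).sum) angMeasure ∧
    ∫ θ, (s.map fun y => F y θ).sum ∂angMeasure = (s.map fun y => ∫ θ, F y θ ∂angMeasure).sum := by
  induction s using Multiset.induction_on with
  | empty => simp
  | cons b s ih =>
    simp only [Multiset.map_cons, Multiset.sum_cons]
    refine ⟨(hF b).add ih.1, ?_⟩
    rw [integral_add (hF b) ih.1, ih.2]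

namespace EqData

variable {μ : Measure ℂ} {R : ℝ}

lemma integrable_prod (h : EqData f g μ R) (a : ℂ) {r : ℝ} (hr : 0 < r) :
    Integrable (fun p : ℂ × ℝ => Real.log ‖p.1 - circleMap a r p.2‖) (μ.prod angMeasure) := by
  have := h.prob
  have hR := h.one_le_R
  set B := Real.log (R + ‖a‖ + r) with hB
  have hB0 : 0 ≤ B := Real.log_nonneg (by linarith [norm_nonneg a])
  have hmeas : Measurable fun p : ℂ × ℝ => Real.log ‖p.1 - circleMap a r p.2‖ := by
    have : Measurable fun p : ℂ × ℝ => circleMap a r p.2 :=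
      (continuous_circleMap a r).measurable.comp measurable_snd
    fun_prop
  have hle : ∀ z, ‖z‖ ≤ R → ∀ θ, 0 ≤ B - Real.log ‖z - circleMap a r θ‖ := by
    intro z hz θ
    have h1 : ‖z - circleMap a r θ‖ ≤ R + ‖a‖ + r := by
      have h2 : ‖circleMap a r θ - a‖ = r := by
        rw [circleMap_sub_center, norm_circleMap_zero, abs_of_pos hr]
      calc ‖z - circleMap a r θ‖ = ‖z - a - (circleMap a r θ - a)‖ := by congr 1; ring
        _ ≤ ‖z‖ + ‖a‖ + r := (norm_sub_le _ _).trans (by linarith [norm_sub_le z a])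
        _ ≤ _ := by linarith
    rcases (norm_nonneg (z - circleMap a r θ)).eq_or_lt with h0 | h0
    · rw [← h0]
      simpa using hB0
    · exact sub_nonneg.2 (Real.log_le_log h0 h1)
  have key : Integrable (fun p : ℂ × ℝ => B - Real.log ‖p.1 - circleMap a r p.2‖)
      (μ.prod angMeasure) := by
    have hm : Measurable fun p : ℂ × ℝ => B - Real.log ‖p.1 - circleMap a r p.2‖ :=
      measurable_const.sub hmeas
    rw [integrable_prod_iff hm.aestronglyMeasurable]
    refine ⟨ae_of_all _ fun z => (integrable_const B).sub (integrable_log_circleMap a z r), ?_⟩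
    refine ((integrable_const B).sub
      (h.integrable_of_continuous (continuous_truncLog a hr))).congr ?_
    filter_upwards [h.supp] with z hz
    have : ∫ θ, ‖B - Real.log ‖z - circleMap a r θ‖‖ ∂angMeasure
        = ∫ θ, (B - Real.log ‖z - circleMap a r θ‖) ∂angMeasure :=
      integral_congr_ae (ae_of_all _ fun θ => Real.norm_of_nonneg (hle z hz θ))
    rw [this, integral_sub (integrable_const B) (integrable_log_circleMap a z r),
      integral_log_circleMap a z hr]
    simp
  refine ((integrable_const B).sub key).congr (ae_of_all _ fun z => ?_)
  simp

/-- The contraction estimate for truncated logarithms, uniform on the invariant disc: averaging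
over the circle removes the exceptional centres. -/
lemma exists_Lam_truncLog_le (h : EqData f g μ R) : ∃ C : ℝ, 0 ≤ C ∧ ∀ n (a z : ℂ) (r : ℝ),
    0 < r → ‖z‖ ≤ R → ((Lam f g)^[n] (truncLog a r)) z
      ≤ (∫ w, truncLog a r w ∂μ) + C * ((g.natDegree : ℝ) / f.natDegree) ^ n := by
  have := h.prob
  obtain ⟨C, hC, H⟩ := h.exists_Lam_log_le
  refine ⟨C, hC, fun n a z r hr hz => ?_⟩
  set c := C * ((g.natDegree : ℝ) / f.natDegree) ^ n with hc
  have hprod := h.integrable_prod a hr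
  obtain ⟨hi, hs⟩ := integral_multiset_sum (F := fun y θ => Real.log ‖y - circleMap a r θ‖)
    (iterFib f g n z) fun y => integrable_log_circleMap a y r
  have hswap : ∫ w, truncLog a r w ∂μ
      = ∫ θ, ∫ w, Real.log ‖w - circleMap a r θ‖ ∂μ ∂angMeasure := by
    rw [← integral_integral_swap hprod]
    simp only [integral_log_circleMap a _ hr]
  have hleft : ((Lam f g)^[n] (truncLog a r)) z
      = ∫ θ, ((Lam f g)^[n] fun y => Real.log ‖y - circleMap a r θ‖) z ∂angMeasure := by
    simp only [Lam_iterate_eq]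
    rw [integral_const_mul, hs]
    simp only [integral_log_circleMap a _ hr]
  have hui : Integrable (fun θ => ∫ w, Real.log ‖w - circleMap a r θ‖ ∂μ) angMeasure :=
    hprod.integral_prod_right
  have hright : (∫ w, truncLog a r w ∂μ) + c
      = ∫ θ, ((∫ w, Real.log ‖w - circleMap a r θ‖ ∂μ) + c) ∂angMeasure := by
    rw [integral_add hui (integrable_const c), hswap]
    simp
  rw [hleft, hright]
  refine integral_mono_ae ?_ (hui.add (integrable_const c)) ?_
  · simp only [Lam_iterate_eq]
    exact hi.const_mul _
  · filter_upwards [circleMap_notMem_ae a hr (iterFib f g n z)] with θ hθ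
    exact H n _ z hz hθ

/-- For truncated logarithms the deviations `∫ φ dμ + C λⁿ - Λⁿφ` are nonnegative with summable
integrals, hence tend to zero almost everywhere. -/
lemma ae_tendsto_truncLog (h : EqData f g μ R) (a : ℂ) {r : ℝ} (hr : 0 < r) :
    ∀ᵐ z ∂μ, Tendsto (fun n => ((Lam f g)^[n] (truncLog a r)) z) atTop
      (nhds (∫ w, truncLog a r w ∂μ)) := by
  have := h.prob
  obtain ⟨C, hC, H⟩ := h.exists_Lam_truncLog_le
  have hf := h.one_le_f
  set q : ℝ := (g.natDegree : ℝ) / f.natDegree with hq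
  have hq0 : 0 ≤ q := by positivity
  have hq1 : q < 1 := by
    rw [hq, div_lt_one (by positivity)]
    exact_mod_cast h.lt
  set I := ∫ w, truncLog a r w ∂μ with hI
  have hcont : ∀ n, Continuous ((Lam f g)^[n] (truncLog a r)) := fun n =>
    continuous_Lam_iterate hf (continuous_truncLog a hr) n
  set ψ : ℕ → ℂ → ℝ := fun n z => I + C * q ^ n - ((Lam f g)^[n] (truncLog a r)) z with hψ
  have hψc : ∀ n, Continuous (ψ n) := fun n => continuous_const.sub (hcont n)
  have hψ0 : ∀ᵐ z ∂μ, ∀ n, 0 ≤ ψ n z := by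
    filter_upwards [h.supp] with z hz n
    exact sub_nonneg.2 (H n a z r hr hz)
  have hψi : ∀ n, ∫ z, ψ n z ∂μ = C * q ^ n := by
    intro n
    rw [hψ]
    simp only
    rw [integral_sub (integrable_const _) (h.integrable_of_continuous (hcont n)),
      h.integral_Lam_iterate (continuous_truncLog a hr) n]
    simp [hI]
  have hlint : ∀ n, ∫⁻ z, ENNReal.ofReal (ψ n z) ∂μ = ENNReal.ofReal (C * q ^ n) := fun n => by
    rw [← hψi n, ofReal_integral_eq_lintegral_ofReal (h.integrable_of_continuous (hψc n))
      (by filter_upwards [hψ0] with z hz using hz n)]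
  have hmeas : ∀ n, Measurable fun z => ENNReal.ofReal (ψ n z) := fun n =>
    (hψc n).measurable.ennreal_ofReal
  have hsum : ∫⁻ z, ∑' n, ENNReal.ofReal (ψ n z) ∂μ ≠ ⊤ := by
    rw [lintegral_tsum fun n => (hmeas n).aemeasurable]
    simp only [hlint]
    have hs : Summable fun n => C * q ^ n := (summable_geometric_of_lt_one hq0 hq1).mul_left C
    rw [← ENNReal.ofReal_tsum_of_nonneg (fun n => by positivity) hs]
    exact ENNReal.ofReal_ne_top
  filter_upwards [ae_lt_top (Measurable.tsum hmeas) hsum, hψ0] with z hz hz0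
  have h1 := ENNReal.tendsto_atTop_zero_of_tsum_ne_top hz.ne
  have h2 : Tendsto (fun n => ψ n z) atTop (nhds 0) := by
    have := (ENNReal.tendsto_toReal ENNReal.zero_ne_top).comp h1
    simpa [Function.comp_def, ENNReal.toReal_ofReal (hz0 _)] using this
  have h3 : Tendsto (fun n => I + C * q ^ n) atTop (nhds (I + C * 0)) :=
    tendsto_const_nhds.add ((tendsto_pow_atTop_nhds_zero_of_lt_one hq0 hq1).const_mul C)
  have h4 := h3.sub h2
  simpa [hψ] using h4

end EqData

/-! ### Density of truncated logarithms -/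

/-- The restriction of a truncated logarithm to the disc of radius `R`. -/
noncomputable def discLog (R : ℝ) (a : ℂ) (r : ℝ) (hr : 0 < r) :
    C(Metric.closedBall (0 : ℂ) R, ℝ) :=
  (⟨truncLog a r, continuous_truncLog a hr⟩ : C(ℂ, ℝ)).restrict _

/-- Truncated logarithms span a dense subspace of the continuous functions on a disc: differences
of two of them with the same centre are bump functions, and convolutions with small bumps
are uniform approximations. -/
lemma restrict_mem_of_discLog_mem {R : ℝ} (V : Submodule ℝ C(Metric.closedBall (0 : ℂ) R, ℝ))
    (hV : IsClosed (V : Set C(Metric.closedBall (0 : ℂ) R, ℝ)))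
    (hmem : ∀ a r (hr : 0 < r), discLog R a r hr ∈ V) (φ : C(ℂ, ℝ)) :
    φ.restrict (Metric.closedBall (0 : ℂ) R) ∈ V := by
  rcases lt_or_ge R 0 with hR | hR
  · have : φ.restrict (Metric.closedBall (0 : ℂ) R) = 0 := by
      ext ⟨z, hz⟩
      rw [Metric.closedBall_eq_empty.2 hR] at hz
      exact hz.elim
    rw [this]
    exact V.zero_mem
  refine Metric.mem_of_closed' hV |>.2 fun ε hε => ?_
  set B := Metric.closedBall (0 : ℂ) (R + 1) with hB
  have hBc : IsCompact B := isCompact_closedBall _ _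
  have huc := hBc.uniformContinuousOn_of_continuous φ.continuous.continuousOn
  rw [Metric.uniformContinuousOn_iff] at huc
  obtain ⟨δ, hδ, huc⟩ := huc (ε / 2) (half_pos hε)
  obtain ⟨s, hs0, hsδ, hs1⟩ : ∃ s : ℝ, 0 < s ∧ s < δ ∧ s ≤ 1 :=
    ⟨min (δ / 2) 1, by positivity, (min_le_left _ _).trans_lt (half_lt_self hδ), min_le_right _ _⟩
  have hs2 : 0 < s / 2 := half_pos hs0
  set κ : ℂ → ℝ := fun w => truncLog 0 s w - truncLog 0 (s / 2) w with hκ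
  have hκc : Continuous κ := (continuous_truncLog 0 hs0).sub (continuous_truncLog 0 hs2)
  have hκ0 : ∀ w, 0 ≤ κ w := fun w => sub_nonneg.2 (truncLog_mono hs2 (by linarith))
  have hκs : ∀ w, s ≤ ‖w‖ → κ w = 0 := by
    intro w hw
    rw [hκ]
    simp only
    rw [truncLog_of_le (by simpa using hw), truncLog_of_le (by rw [sub_zero]; linarith), sub_self]
  have hκsupp : HasCompactSupport κ :=
    HasCompactSupport.intro (isCompact_closedBall (0 : ℂ) s) fun w hw =>
      hκs w (by simpa using (not_le.1 fun h => hw (by simpa using h)).le)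
  have hκne : κ 0 ≠ 0 := by
    intro h1
    rw [hκ] at h1
    simp only at h1
    rw [truncLog_of_ge (by simpa using hs0.le), truncLog_of_ge (by simpa using hs2.le)] at h1
    have := Real.log_lt_log hs2 (by linarith : s / 2 < s)
    linarith
  set c := ∫ w, κ w with hc
  have hc0 : 0 < c := hκc.integral_pos_of_hasCompactSupport_nonneg_nonzero hκsupp hκ0 hκne
  have hshift : ∀ (a z : ℂ) (r : ℝ), truncLog 0 r (z - a) = truncLog a r z := by
    intro a z r
    simp [truncLog]
  -- the translates of the bump, as a continuous family in the centre
  set k : C(ℂ, C(Metric.closedBall (0 : ℂ) R, ℝ)) := ContinuousMap.curry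
    ⟨fun p : ℂ × Metric.closedBall (0 : ℂ) R => κ (p.2 - p.1), by fun_prop⟩ with hk
  have hkV : ∀ a, k a ∈ V := by
    intro a
    have : k a = discLog R a s hs0 - discLog R a (s / 2) hs2 := by
      ext z
      change κ (z - a) = truncLog a s z - truncLog a (s / 2) z
      rw [hκ]
      simp only [hshift]
    rw [this]
    exact V.sub_mem (hmem _ _ _) (hmem _ _ _)
  have hint : IntegrableOn (fun a => φ a • k a) B volume :=
    (φ.continuous.smul k.continuous).continuousOn.integrableOn_compact hBc
  have hvol0 : volume B ≠ 0 :=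
    (Metric.measure_closedBall_pos volume (0 : ℂ) (by linarith)).ne'
  have hvolt : volume B ≠ ⊤ := hBc.measure_lt_top.ne
  have hI : (∫ a in B, φ a • k a) ∈ V := by
    have h1 := V.convex.set_average_mem hV hvol0 hvolt
      (ae_of_all _ fun a => V.smul_mem (φ a) (hkV a)) hint
    rw [setAverage_eq] at h1
    have h2 : volume.real B ≠ 0 := by
      rw [measureReal_def]
      exact (ENNReal.toReal_pos hvol0 hvolt).ne'
    simpa [smul_smul, mul_inv_cancel₀ h2] using V.smul_mem (volume.real B) h1
  refine ⟨c⁻¹ • ∫ a in B, φ a • k a, V.smul_mem _ hI, ?_⟩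
  refine lt_of_le_of_lt ?_ (half_lt_self hε)
  rw [ContinuousMap.dist_le (half_pos hε).le]
  rintro ⟨z, hz⟩
  have hzR : ‖z‖ ≤ R := by simpa using hz
  have heval : (∫ a in B, φ a • k a) ⟨z, hz⟩ = ∫ a in B, φ a * κ (z - a) := by
    have := (ContinuousMap.evalCLM ℝ (⟨z, hz⟩ : Metric.closedBall (0 : ℂ) R)).integral_comp_comm
      hint
    rw [ContinuousMap.evalCLM_apply] at this
    rw [← this]
    rfl
  have hoff : ∀ a, a ∉ B → κ (z - a) = 0 := by
    intro a ha
    refine hκs _ ?_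
    have : R + 1 < ‖a‖ := not_le.1 fun h => ha (by simpa [hB] using h)
    have h2 := norm_sub_norm_le a z
    rw [norm_sub_rev] at h2
    linarith
  have hcB : ∫ a in B, κ (z - a) = c := by
    rw [setIntegral_eq_integral_of_forall_compl_eq_zero hoff]
    exact integral_sub_left_eq_self κ volume z
  have hκz : Continuous fun a => κ (z - a) := by fun_prop
  have hi1 : IntegrableOn (fun a => φ a * κ (z - a)) B volume :=
    (φ.continuous.mul hκz).continuousOn.integrableOn_compact hBc
  have hi2 : IntegrableOn (fun a => κ (z - a)) B volume :=
    hκz.continuousOn.integrableOn_compact hBc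
  have hdiff : ‖∫ a in B, (φ z * κ (z - a) - φ a * κ (z - a))‖ ≤ ε / 2 * c := by
    rw [← hcB, ← integral_const_mul]
    refine norm_integral_le_of_norm_le (hi2.const_mul _) ?_
    refine (ae_restrict_iff' measurableSet_closedBall).2 (ae_of_all _ fun a ha => ?_)
    rw [← sub_mul, norm_mul, Real.norm_of_nonneg (hκ0 _)]
    rcases lt_or_ge ‖z - a‖ s with h1 | h1
    · refine mul_le_mul_of_nonneg_right ?_ (hκ0 _)
      have hzB : z ∈ B := by
        simp only [hB, mem_closedBall_zero_iff]
        linarith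
      have := huc z hzB a ha (by rw [dist_eq_norm]; linarith)
      rw [Real.dist_eq] at this
      exact this.le
    · rw [hκs _ h1]
      simp
  rw [integral_sub (hi2.const_mul _) hi1, integral_const_mul, hcB] at hdiff
  rw [ContinuousMap.restrict_apply, ContinuousMap.smul_apply, heval, Real.dist_eq, smul_eq_mul]
  have h3 : φ z - c⁻¹ * ∫ a in B, φ a * κ (z - a)
      = c⁻¹ * (φ z * c - ∫ a in B, φ a * κ (z - a)) := by
    field_simp
  rw [Real.norm_eq_abs] at hdiff
  change |φ z - c⁻¹ * ∫ a in B, φ a * κ (z - a)| ≤ ε / 2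
  rw [h3, abs_mul, abs_of_pos (inv_pos.2 hc0), inv_mul_le_iff₀ hc0]
  linarith

/-! ### Almost everywhere convergence -/

namespace EqData

variable {μ : Measure ℂ} {R : ℝ}

/-- Uniform approximation on the invariant disc preserves convergence at a given point. -/
lemma tendsto_of_approx (h : EqData f g μ R) {z : ℂ} (hz : ‖z‖ ≤ R) {ψ : ℂ → ℝ}
    (hψ : Continuous ψ) (H : ∀ ε > 0, ∃ χ : ℂ → ℝ, Continuous χ ∧
      (∀ w, ‖w‖ ≤ R → |ψ w - χ w| ≤ ε) ∧
      Tendsto (fun n => ((Lam f g)^[n] χ) z) atTop (nhds (∫ w, χ w ∂μ))) :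
    Tendsto (fun n => ((Lam f g)^[n] ψ) z) atTop (nhds (∫ w, ψ w ∂μ)) := by
  have := h.prob
  rw [Metric.tendsto_atTop]
  intro ε hε
  obtain ⟨χ, hχ, hclose, hlim⟩ := H (ε / 4) (by positivity)
  rw [Metric.tendsto_atTop] at hlim
  obtain ⟨N, hN⟩ := hlim (ε / 4) (by positivity)
  refine ⟨N, fun n hn => ?_⟩
  have h1 := hN n hn
  have h2 : |∫ w, ψ w ∂μ - ∫ w, χ w ∂μ| ≤ ε / 4 := by
    rw [← integral_sub (h.integrable_of_continuous hψ) (h.integrable_of_continuous hχ)]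
    have := norm_integral_le_of_norm_le_const (μ := μ) (C := ε / 4) (f := fun w => ψ w - χ w)
      (by filter_upwards [h.supp] with w hw using hclose w hw)
    simpa using this
  have hL : ∀ φ₁ φ₂ : ℂ → ℝ, (∀ w, ‖w‖ ≤ R → φ₁ w ≤ φ₂ w + ε / 4) →
      ((Lam f g)^[n] φ₁) z ≤ ((Lam f g)^[n] φ₂) z + ε / 4 := by
    intro φ₁ φ₂ hle
    refine (Lam_iterate_mono fun y hy => hle y (h.disc n z hz y hy)).trans_eq ?_
    rw [Lam_iterate_add n φ₂ (fun _ => ε / 4) z, Lam_iterate_const h.one_le_f]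
  have h3 := hL ψ χ fun w hw => by linarith [(abs_le.1 (hclose w hw)).2]
  have h4 := hL χ ψ fun w hw => by linarith [(abs_le.1 (hclose w hw)).1]
  rw [Real.dist_eq, abs_lt] at h1 ⊢
  rw [abs_le] at h2
  constructor <;> linarith [h1.1, h1.2, h2.1, h2.2]

/-- The functions on the invariant disc that extend to a continuous function on the plane whose
iterated averages at `z` converge to the `μ`-mean. -/
noncomputable def convSubmodule (h : EqData f g μ R) (z : ℂ) :
    Submodule ℝ C(Metric.closedBall (0 : ℂ) R, ℝ) where
  carrier := {φ | ∃ ψ : C(ℂ, ℝ), ψ.restrict _ = φ ∧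
    Tendsto (fun n => ((Lam f g)^[n] ψ) z) atTop (nhds (∫ w, ψ w ∂μ))}
  zero_mem' := by
    refine ⟨0, by ext; rfl, ?_⟩
    have h0 : (fun n => ((Lam f g)^[n] ((0 : C(ℂ, ℝ)) : ℂ → ℝ)) z) = fun _ => 0 :=
      funext fun n => Lam_iterate_const h.one_le_f n 0 z
    rw [h0]
    simp
  add_mem' := by
    rintro _ _ ⟨ψ₁, rfl, h₁⟩ ⟨ψ₂, rfl, h₂⟩
    refine ⟨ψ₁ + ψ₂, by ext; rfl, ?_⟩
    have h0 : (fun n => ((Lam f g)^[n] ((ψ₁ + ψ₂ : C(ℂ, ℝ)) : ℂ → ℝ)) z)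
        = fun n => ((Lam f g)^[n] ψ₁) z + ((Lam f g)^[n] ψ₂) z :=
      funext fun n => Lam_iterate_add n ψ₁ ψ₂ z
    have h3 : ∫ w, (ψ₁ + ψ₂ : C(ℂ, ℝ)) w ∂μ = (∫ w, ψ₁ w ∂μ) + ∫ w, ψ₂ w ∂μ :=
      integral_add (h.integrable_of_continuous ψ₁.continuous)
        (h.integrable_of_continuous ψ₂.continuous)
    rw [h0, h3]
    exact h₁.add h₂
  smul_mem' := by
    rintro c _ ⟨ψ, rfl, h₁⟩
    refine ⟨c • ψ, by ext; rfl, ?_⟩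
    have h0 : (fun n => ((Lam f g)^[n] ((c • ψ : C(ℂ, ℝ)) : ℂ → ℝ)) z)
        = fun n => c * ((Lam f g)^[n] ψ) z :=
      funext fun n => Lam_iterate_const_mul n c ψ z
    have h3 : ∫ w, (c • ψ : C(ℂ, ℝ)) w ∂μ = c * ∫ w, ψ w ∂μ := integral_const_mul c _
    rw [h0, h3]
    exact h₁.const_mul c

lemma tendsto_of_mem_closure (h : EqData f g μ R) {z : ℂ} (hz : ‖z‖ ≤ R) (ψ : C(ℂ, ℝ))
    (hψ : ψ.restrict _ ∈ (h.convSubmodule z).topologicalClosure) :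
    Tendsto (fun n => ((Lam f g)^[n] ψ) z) atTop (nhds (∫ w, ψ w ∂μ)) := by
  refine h.tendsto_of_approx hz ψ.continuous fun ε hε => ?_
  obtain ⟨_, ⟨χ, rfl, hχ⟩, hdist⟩ := Metric.mem_closure_iff.1 hψ ε hε
  refine ⟨χ, χ.continuous, fun w hw => ?_, hχ⟩
  have := (ContinuousMap.dist_apply_le_dist (f := ψ.restrict _) (g := χ.restrict _)
    (⟨w, by simpa using hw⟩ : Metric.closedBall (0 : ℂ) R)).trans hdist.le
  rwa [Real.dist_eq] at this

/-- Almost every point of the disc is generic for all continuous functions simultaneously. -/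
lemma ae_tendsto (h : EqData f g μ R) : ∀ᵐ z ∂μ, ∀ ψ : C(ℂ, ℝ),
    Tendsto (fun n => ((Lam f g)^[n] ψ) z) atTop (nhds (∫ w, ψ w ∂μ)) := by
  set S : Set C(Metric.closedBall (0 : ℂ) R, ℝ) := {φ | ∃ a r, ∃ hr : 0 < r, φ = discLog R a r hr}
    with hS
  obtain ⟨t, htS, htc, hSt⟩ :=
    (TopologicalSpace.IsSeparable.of_separableSpace S).exists_countable_dense_subset
  have hae : ∀ᵐ z ∂μ, ∀ φ ∈ t, φ ∈ h.convSubmodule z := by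
    rw [ae_ball_iff htc]
    intro φ hφ
    obtain ⟨a, r, hr, rfl⟩ := htS hφ
    filter_upwards [h.ae_tendsto_truncLog a hr] with z hz
    exact ⟨⟨truncLog a r, continuous_truncLog a hr⟩, rfl, hz⟩
  filter_upwards [hae, h.supp] with z hzt hz ψ
  refine h.tendsto_of_mem_closure hz ψ (restrict_mem_of_discLog_mem _
    (Submodule.isClosed_topologicalClosure _) (fun a r hr => ?_) ψ)
  exact closure_mono (fun φ hφ => hzt φ hφ) (hSt ⟨a, r, hr, rfl⟩)

end EqData

end PreimEq

theorem preimages_equidistribute_ae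
    (f g : Polynomial ℂ) (hdeg : g.degree < f.degree) (hg : 1 ≤ g.degree)
    (μ : Measure ℂ) (hμ : IsEquilibrium f g μ) :
    ∀ᵐ z ∂μ, ∀ φ : ℂ → ℝ, Continuous φ → (∃ M : ℝ, ∀ w, |φ w| ≤ M) →
      Tendsto (fun n => ((Lam f g)^[n] φ) z) atTop (nhds (∫ w, φ w ∂μ)) := by
  obtain ⟨R, h⟩ := PreimEq.exists_eqData hdeg hg hμ
  filter_upwards [h.ae_tendsto] with z hz φ hφ _
  exact hz ⟨φ, hφ⟩
end
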